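/- Let K be a compact subset of ℝ^N with empty interior such that ℝ^N \ K is nowhere thin. Then for each continuous function f on K and each ε > 0 there exists a function h harmonic on an open neighborhood of K such that |f(x) − h(x)| < ε for all x ∈ K. -/

import Mathlib

open MeasureTheory Metric Filter Topology Set

noncomputable section

variable {E : Type*} [NormedAddCommGroup E] [InnerProductSpace ℝ E]
  [MeasurableSpace E] [BorelSpace E]

/-- The mean of an extended-real-valued function over the sphere of center `x`
and radius `r`, with respect to `d`-dimensional Hausdorff measure, defined as the
infimum of the averages of the truncations `v ⊔ (-n)`. -/
def sphereMean (d : ℝ) (v : E → EReal) (x : E) (r : ℝ) : EReal :=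
  ⨅ n : ℕ, ((⨍ y in sphere x r, ((v y) ⊔ (-(n : ℝ) : EReal)).toReal ∂ μH[d] : ℝ) : EReal)

/-- `v : E → [-∞, ∞)` is subharmonic on `U` (with sphere dimension `d = N - 1`):
upper semicontinuous on `U`, `< ∞`, not identically `-∞`, and satisfying the
sub-mean value inequality on spheres of closed balls contained in `U`. -/
def IsSubharmonicOn (d : ℝ) (v : E → EReal) (U : Set E) : Prop :=
  UpperSemicontinuousOn v U ∧ (∀ x ∈ U, v x < ⊤) ∧ (∃ x ∈ U, v x ≠ ⊥) ∧
    ∀ x r, 0 < r → closedBall x r ⊆ U → v x ≤ sphereMean d v x r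

/-- `u : E → (-∞, ∞]` is superharmonic on `U` iff `-u` is subharmonic on `U`. -/
def IsSuperharmonicOn (d : ℝ) (u : E → EReal) (U : Set E) : Prop :=
  IsSubharmonicOn d (fun x => -(u x)) U

/-- A set is polar if it is contained in the `-∞`-set of a function subharmonic
on a neighborhood of it. -/
def IsPolar (d : ℝ) (S : Set E) : Prop :=
  ∃ U : Set E, IsOpen U ∧ S ⊆ U ∧
    ∃ v : E → EReal, IsSubharmonicOn d v U ∧ ∀ x ∈ S, v x = ⊥

/-- The fine topology: the coarsest topology making every globally defined
subharmonic function continuous. -/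
def fineTopology (E : Type*) [NormedAddCommGroup E] [InnerProductSpace ℝ E]
    [MeasurableSpace E] [BorelSpace E] (d : ℝ) : TopologicalSpace E :=
  ⨅ (v : E → EReal) (_ : IsSubharmonicOn d v Set.univ),
    TopologicalSpace.induced v inferInstance

/-- A set `A` is thin at `ζ` if `ζ` is not a fine limit point of `A`. -/
def ThinAt (d : ℝ) (A : Set E) (ζ : E) : Prop :=
  ζ ∉ @closure E (fineTopology E d) (A \ {ζ})

/-- A real-valued function is harmonic on `U` if it is continuous on `U` and
satisfies the mean value equality on spheres of closed balls contained in `U`. -/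
def IsHarmonicOn (d : ℝ) (h : E → ℝ) (U : Set E) : Prop :=
  ContinuousOn h U ∧ ∀ x r, 0 < r → closedBall x r ⊆ U →
    h x = ⨍ y in sphere x r, h y ∂ μH[d]

/-- An open set is Greenian if it carries a positive superharmonic function that
is not harmonic (i.e. a potential-like function exists). -/
def IsGreenian (d : ℝ) (ω : Set E) : Prop :=
  ω.Nonempty ∧ ∃ u : E → EReal, IsSuperharmonicOn d u ω ∧ (∀ x ∈ ω, 0 < u x) ∧
    ¬ ∃ h : E → ℝ, IsHarmonicOn d h ω ∧ ∀ x ∈ ω, u x = (h x : EReal)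

/-- The Perron upper class of a boundary function `f` on `ω`. -/
def upperClass (d : ℝ) (ω : Set E) (f : E → EReal) : Set (E → EReal) :=
  {u | IsSuperharmonicOn d u ω ∧ (∃ c : ℝ, ∀ x ∈ ω, (c : EReal) ≤ u x) ∧
    ∀ ζ ∈ frontier ω, f ζ ≤ Filter.liminf u (nhdsWithin ζ ω)}

/-- The upper Perron–Wiener–Brelot solution of the Dirichlet problem on `ω`
with boundary data `f`. -/
def PWB (d : ℝ) (ω : Set E) (f : E → EReal) (x : E) : EReal :=
  ⨅ u ∈ upperClass d ω f, u x

/-- A boundary point `ζ` of `ω` is regular for the Dirichlet problem if for every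
continuous boundary data the PWB solution attains the boundary value at `ζ`. -/
def IsRegularBoundaryPoint (d : ℝ) (ω : Set E) (ζ : E) : Prop :=
  ζ ∈ frontier ω ∧ ∀ f : E → ℝ, ContinuousOn f (frontier ω) →
    Filter.Tendsto (PWB d ω (fun y => (f y : EReal))) (nhdsWithin ζ ω) (nhds ((f ζ : EReal)))

/-- `A ⊆ ∂ω` is negligible for `ω` if it has harmonic measure zero, harmonic
measure being the PWB solution for the indicator boundary data. -/
def IsNegligible (d : ℝ) (ω A : Set E) : Prop :=
  ∀ x ∈ ω, PWB d ω (fun y => ((A.indicator (fun _ => (1 : ℝ)) y : ℝ) : EReal)) x = 0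

end

/-!
By duality, it is enough that a continuous functional on `C(K)` annihilating the Newtonian kernels
with poles off `K` vanishes. Such a functional is integration against `μ₁ - μ₂` for two finite
measures on `K`: extend it from the antidiagonal of `C(K) × C(K)` by Hahn–Banach and apply the
Riesz representation theorem. The Newtonian potentials of `μ₁` and `μ₂` agree off `K`. They are
finely continuous, being negatives of subharmonic functions, and no point of space is thin for the
complement of `K`; hence they agree everywhere.

It remains to see that the potential determines the measure. By Newton's theorem, the mean of a
potential over the sphere of radius `r` about `y` is the potential at `y` for the kernel truncated
at distance `r`. So `μ₁` and `μ₂` have the same truncated potentials, whose variation with `r`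
controls the masses of balls, and finite measures agreeing on balls are equal.

Newton's theorem itself follows from the mean value property, which holds for every rotation
invariant finite measure `σ` on a ball centred at `0`: differentiating the integral of a harmonic
function `F` twice along infinitesimal rotations shows that `t ↦ ∫ y, F (t • y) ∂σ` solves the
radial Laplace equation, whose only solutions regular at `t = 0` are the constants.
-/

open Module InnerProductSpace
open scoped Laplacian RealInnerProductSpace

section CompactlySupportedMeasure

theorem smul_mem_closedBall_zero {E : Type*} [NormedAddCommGroup E]
    [NormedSpace ℝ E] {ρ s : ℝ} (hs : s ∈ Icc (0 : ℝ) 1) {y : E} (hy : y ∈ closedBall 0 ρ) :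
    s • y ∈ closedBall (0 : E) ρ :=
  (balanced_closedBall_zero (𝕜 := ℝ)).smul_mem ((Real.norm_of_nonneg hs.1).trans_le hs.2) hy

theorem integrable_of_continuousOn_of_ae_mem {X : Type*} [TopologicalSpace X] [T2Space X]
    [MeasurableSpace X] [OpensMeasurableSpace X] {σ : Measure X} [IsFiniteMeasure σ]
    {B : Set X} (hB : IsCompact B) (hσ : ∀ᵐ y ∂σ, y ∈ B) {f : X → ℝ} (hf : ContinuousOn f B) :
    Integrable f σ := by
  rw [← Measure.restrict_eq_self_of_ae_mem hσ]
  exact hf.integrableOn_compact hB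

variable {E : Type*} [NormedAddCommGroup E] [NormedSpace ℝ E] [MeasurableSpace E] [BorelSpace E]
  {σ : Measure E} [IsFiniteMeasure σ] {B : Set E}

theorem hasDerivAt_integral_of_contDiffAt (hB : IsCompact B) (hσ : ∀ᵐ y ∂σ, y ∈ B)
    {Γ : ℝ × E → ℝ} {Γ' : E → ℝ} {t₀ : ℝ} (hΓ : ∀ y ∈ B, ContDiffAt ℝ 1 Γ (t₀, y))
    (hΓ' : ∀ y ∈ B, HasDerivAt (fun t => Γ (t, y)) (Γ' y) t₀) :
    HasDerivAt (fun t => ∫ y, Γ (t, y) ∂σ) (∫ y, Γ' y ∂σ) t₀ := by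
  obtain ⟨k, hk, hkΓ, hkc⟩ := local_compact_nhds <|
    hB.eventually_forall_of_forall_eventually (P := fun t y => ContDiffAt ℝ 1 Γ (t, y))
      fun y hy => (hΓ y hy).eventually (by simp)
  let Γ₁ : ℝ → E → ℝ := fun t y => fderiv ℝ Γ (t, y) (1, 0)
  have hΓ₁ : ∀ t ∈ k, ∀ y ∈ B, HasDerivAt (fun t => Γ (t, y)) (Γ₁ t y) t := fun t ht y hy =>
    (((hkΓ ht y hy).differentiableAt one_ne_zero).hasFDerivAt).comp_hasDerivAt t
      ((hasDerivAt_id t).prodMk (hasDerivAt_const t y))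
  have hΓ₁c : ContinuousOn (Function.uncurry Γ₁) (k ×ˢ B) := fun p hp =>
    (((hkΓ hp.1 p.2 hp.2).continuousAt_fderiv one_ne_zero).clm_apply
      continuousAt_const).continuousWithinAt
  have hslice : ∀ {g : ℝ × E → ℝ}, ContinuousOn g (k ×ˢ B) → ∀ t ∈ k,
      Integrable (fun y => g (t, y)) σ := fun hg t ht =>
    integrable_of_continuousOn_of_ae_mem hB hσ
      (hg.comp (f := fun y => (t, y)) (by fun_prop) fun y hy => ⟨ht, hy⟩)
  have hΓc : ContinuousOn Γ (k ×ˢ B) := fun p hp =>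
    (hkΓ hp.1 p.2 hp.2).continuousAt.continuousWithinAt
  obtain ⟨C, hC⟩ := (hkc.prod hB).exists_bound_of_continuousOn hΓ₁c
  have ht₀ := mem_of_mem_nhds hk
  have h := (hasDerivAt_integral_of_dominated_loc_of_deriv_le (F := fun t y => Γ (t, y))
    (F' := Γ₁) (bound := fun _ => C) hk
    (mem_of_superset hk fun t ht => (hslice hΓc t ht).aestronglyMeasurable) (hslice hΓc t₀ ht₀)
    (hslice hΓ₁c t₀ ht₀).aestronglyMeasurable
    (hσ.mono fun y hy t ht => hC (t, y) ⟨ht, hy⟩) (integrable_const C)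
    (hσ.mono fun y hy t ht => hΓ₁ t ht y hy)).2
  refine h.congr_deriv (integral_congr_ae (hσ.mono fun y hy => ?_))
  exact (hΓ₁ t₀ ht₀ y hy).unique (hΓ' y hy)

theorem hasDerivAt_integral_comp_smul (hB : IsCompact B) (hσ : ∀ᵐ y ∂σ, y ∈ B) {F : E → ℝ}
    {s : ℝ} (hF : ∀ y ∈ B, ContDiffAt ℝ 1 F (s • y)) :
    HasDerivAt (fun s : ℝ => ∫ y, F (s • y) ∂σ) (∫ y, fderiv ℝ F (s • y) y ∂σ) s := by
  refine hasDerivAt_integral_of_contDiffAt (Γ := fun p => F (p.1 • p.2)) hB hσ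
    (fun y hy => ?_) fun y hy => ?_
  · exact (hF y hy).comp (s, y) (contDiff_fst.smul contDiff_snd).contDiffAt
  · have h := ((hF y hy).differentiableAt one_ne_zero).hasFDerivAt.comp_hasDerivAt s
      ((hasDerivAt_id s).smul_const y)
    rwa [one_smul] at h

theorem hasDerivAt_integral_fderiv_smul (hB : IsCompact B) (hσ : ∀ᵐ y ∂σ, y ∈ B) {F : E → ℝ}
    {s : ℝ} (hF : ∀ y ∈ B, ContDiffAt ℝ 2 F (s • y)) :
    HasDerivAt (fun s : ℝ => ∫ y, fderiv ℝ F (s • y) y ∂σ)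
      (∫ y, fderiv ℝ (fderiv ℝ F) (s • y) y y ∂σ) s := by
  have hDF (y : E) (hy : y ∈ B) : ContDiffAt ℝ 1 (fderiv ℝ F) (s • y) :=
    (hF y hy).fderiv_right (by norm_num)
  refine hasDerivAt_integral_of_contDiffAt (Γ := fun p => fderiv ℝ F (p.1 • p.2) p.2) hB hσ
    (fun y hy => ?_) fun y hy => ?_
  · exact ((hDF y hy).comp (s, y) (contDiff_fst.smul contDiff_snd).contDiffAt).clm_apply
      contDiffAt_snd
  · have h := ((hDF y hy).differentiableAt one_ne_zero).hasFDerivAt.comp_hasDerivAt s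
      ((hasDerivAt_id s).smul_const y)
    simpa using h.clm_apply (hasDerivAt_const s y)

end CompactlySupportedMeasure

section RotationInvariance

variable {E : Type*} [NormedAddCommGroup E] [InnerProductSpace ℝ E]

/-- The generator of the rotations in the plane of `e` and `b`, turning `e` towards `b`
if the two are orthonormal. -/
noncomputable def rotationGenerator (e b : E) : E →L[ℝ] E :=
  (innerSL ℝ e).smulRight b - (innerSL ℝ b).smulRight e

theorem rotationGenerator_apply (e b y : E) :
    rotationGenerator e b y = ⟪e, y⟫ • b - ⟪b, y⟫ • e := by
  simp [rotationGenerator]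

theorem reflection_span_singleton_apply (u v : E) :
    (ℝ ∙ u).reflection v = (2 * (⟪u, v⟫ / ‖u‖ ^ 2)) • u - v := by
  rw [Submodule.reflection_singleton_apply, mul_smul, ofNat_smul_eq_nsmul ℝ]
  rfl

theorem hasDerivAt_reflection_reflection {e : E} (he : e ≠ 0) (b y : E) :
    HasDerivAt (fun t : ℝ => (ℝ ∙ (e + t • b)).reflection ((ℝ ∙ e).reflection y))
      ((2 / ‖e‖ ^ 2) • rotationGenerator e b y) 0 := by
  have he' : ‖e‖ ≠ 0 := norm_ne_zero_iff.2 he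
  let u : ℝ → E := fun t => e + t • b
  have hu : HasDerivAt u b 0 := by
    simpa [u] using ((hasDerivAt_id (0 : ℝ)).smul_const b).const_add e
  have hu0 : u 0 = e := by simp [u]
  set y' := (ℝ ∙ e).reflection y with hy'
  have hquot := ((hu.inner ℝ (hasDerivAt_const 0 y')).fun_div hu.norm_sq
    (by simpa [hu0] using he')).const_mul 2
  refine ((((hquot.fun_smul hu).sub_const y').congr_deriv ?_)).congr_of_eventuallyEq
    (.of_forall fun t => reflection_span_singleton_apply _ y')
  rw [hu0, hy', reflection_span_singleton_apply e y, rotationGenerator_apply]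
  simp only [inner_sub_right, inner_smul_right, real_inner_self_eq_norm_sq, inner_zero_right,
    real_inner_comm b e]
  match_scalars <;> field_simp <;> ring

theorem contDiffAt_reflection_reflection {e : E} (he : e ≠ 0) (b y : E) :
    ContDiffAt ℝ 1
      (fun p : ℝ × E => (ℝ ∙ (e + p.1 • b)).reflection ((ℝ ∙ e).reflection p.2)) (0, y) := by
  have hu : ContDiff ℝ 1 fun p : ℝ × E => e + p.1 • b := by fun_prop
  have hv : ContDiff ℝ 1 fun p : ℝ × E => (ℝ ∙ e).reflection p.2 :=
    (ℝ ∙ e).reflection.contDiff.comp contDiff_snd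
  have hquot := (hu.inner ℝ hv).contDiffAt.div (x := (0, y)) (hu.norm_sq ℝ).contDiffAt
    (by simpa using he)
  exact (((contDiffAt_const.mul hquot).smul hu.contDiffAt).sub hv.contDiffAt).congr_of_eventuallyEq
    (.of_forall fun p => reflection_span_singleton_apply _ _)

variable [MeasurableSpace E]

/-- Invariance of a measure under all linear isometries. -/
def IsRotationInvariant (σ : Measure E) : Prop :=
  ∀ R : E ≃ₗᵢ[ℝ] E, MeasurePreserving R σ σ

variable [BorelSpace E] {σ : Measure E}

theorem IsRotationInvariant.integral_comp (hσ : IsRotationInvariant σ) (R : E ≃ₗᵢ[ℝ] E)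
    (g : E → ℝ) : ∫ y, g (R y) ∂σ = ∫ y, g y ∂σ :=
  (hσ R).integral_comp R.toHomeomorph.measurableEmbedding g

theorem IsRotationInvariant.map_const_smul (hσ : IsRotationInvariant σ) (s : ℝ) :
    IsRotationInvariant (σ.map (s • ·)) := by
  intro R
  have hs : Measurable fun y : E => s • y := (continuous_const_smul s).measurable
  refine ⟨R.continuous.measurable, ?_⟩
  rw [Measure.map_map R.continuous.measurable hs]
  conv_rhs => rw [← (hσ R).map_eq, Measure.map_map hs R.continuous.measurable]
  congr 1
  ext y
  simp

theorem IsRotationInvariant.integral_clm_apply (hσ : IsRotationInvariant σ) (L : E →L[ℝ] ℝ) :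
    ∫ y, L y ∂σ = 0 := by
  have h := hσ.integral_comp (LinearIsometryEquiv.neg ℝ) L
  simp only [LinearIsometryEquiv.coe_neg, map_neg, integral_neg] at h
  linarith

variable [FiniteDimensional ℝ E] [IsFiniteMeasure σ] {ρ : ℝ}

theorem IsRotationInvariant.integral_fderiv_rotationGenerator (hσ : IsRotationInvariant σ)
    (hσρ : ∀ᵐ y ∂σ, y ∈ closedBall 0 ρ) {G : E → ℝ}
    (hG : ∀ y ∈ closedBall 0 ρ, ContDiffAt ℝ 1 G y) (e b : E) :
    ∫ y, fderiv ℝ G y (rotationGenerator e b y) ∂σ = 0 := by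
  rcases eq_or_ne e 0 with rfl | he
  · simp [rotationGenerator_apply]
  let R : ℝ → E ≃ₗᵢ[ℝ] E := fun t => (ℝ ∙ e).reflection.trans (ℝ ∙ (e + t • b)).reflection
  have hR0 (y : E) : R 0 y = y := by simp [R]
  have hd : HasDerivAt (fun t => ∫ y, G (R t y) ∂σ)
      (∫ y, fderiv ℝ G y ((2 / ‖e‖ ^ 2) • rotationGenerator e b y) ∂σ) 0 := by
    refine hasDerivAt_integral_of_contDiffAt (Γ := fun p => G (R p.1 p.2))
      (isCompact_closedBall 0 ρ) hσρ (fun y hy => ?_) fun y hy => ?_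
    · refine ContDiffAt.comp (0, y) ?_ (contDiffAt_reflection_reflection he b y)
      simpa [hR0] using hG y hy
    · refine HasFDerivAt.comp_hasDerivAt 0 ?_ (hasDerivAt_reflection_reflection he b y)
      simpa [hR0] using ((hG y hy).differentiableAt one_ne_zero).hasFDerivAt
  simp only [hσ.integral_comp] at hd
  have h0 := hd.unique (hasDerivAt_const _ _)
  simpa [integral_const_mul, he] using h0

end RotationInvariance

section RotationGenerator

variable {E : Type*} [NormedAddCommGroup E] [InnerProductSpace ℝ E]

theorem rotationGenerator_sq_apply (e b y : E) :
    rotationGenerator e b (rotationGenerator e b y) =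
      (⟪e, y⟫ * ⟪e, b⟫ - ⟪b, y⟫ * ‖e‖ ^ 2) • b - (⟪e, y⟫ * ‖b‖ ^ 2 - ⟪b, y⟫ * ⟪e, b⟫) • e := by
  simp only [rotationGenerator_apply, inner_sub_right, inner_smul_right,
    real_inner_self_eq_norm_sq, real_inner_comm e b]

variable {ι : Type*} [Fintype ι] (b : OrthonormalBasis ι ℝ E)

theorem sum_rotationGenerator_sq_apply (y : E) :
    ∑ i, ∑ j, rotationGenerator (b i) (b j) (rotationGenerator (b i) (b j) y) =
      (-2 * (Fintype.card ι - 1 : ℝ)) • y := by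
  classical
  have hij (i j : ι) : rotationGenerator (b i) (b j) (rotationGenerator (b i) (b j) y) =
      (if i = j then (2 * ⟪b i, y⟫) • b i else 0) - ⟪b j, y⟫ • b j - ⟪b i, y⟫ • b i := by
    rw [rotationGenerator_sq_apply, b.inner_eq_ite, b.norm_eq_one, b.norm_eq_one]
    split_ifs with h
    · subst h; module
    · module
  simp only [hij, Finset.sum_sub_distrib, Finset.sum_ite_eq, Finset.mem_univ, if_true, mul_smul,
    ← Finset.smul_sum, Finset.sum_const, Finset.card_univ,
    smul_comm (_ : ℝ) (Fintype.card ι), b.sum_repr']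
  module

theorem sum_bilin_rotationGenerator (B : E →L[ℝ] E →L[ℝ] ℝ) (y : E) :
    ∑ i, ∑ j, B (rotationGenerator (b i) (b j) y) (rotationGenerator (b i) (b j) y) =
      2 * (‖y‖ ^ 2 * ∑ i, B (b i) (b i) - B y y) := by
  have hij (i j : ι) :
      B (rotationGenerator (b i) (b j) y) (rotationGenerator (b i) (b j) y) =
        ⟪b i, y⟫ ^ 2 * B (b j) (b j) + B (b i) (b i) * ⟪b j, y⟫ ^ 2
          - B (⟪b j, y⟫ • b j) (⟪b i, y⟫ • b i) - B (⟪b i, y⟫ • b i) (⟪b j, y⟫ • b j) := by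
    simp only [rotationGenerator_apply, map_sub, map_smul, sub_apply,
      smul_apply, smul_eq_mul]
    ring
  have hnorm : ∑ i, ⟪b i, y⟫ ^ 2 = ‖y‖ ^ 2 := by
    simpa using b.sum_sq_norm_inner_right y
  simp only [hij, Finset.sum_sub_distrib, Finset.sum_add_distrib, ← Finset.mul_sum,
    ← Finset.sum_mul, ← map_sum, ← sum_apply, b.sum_repr', hnorm]
  ring

end RotationGenerator

theorem laplacian_eq_sum_fderiv_fderiv {E ι : Type*} [NormedAddCommGroup E]
    [InnerProductSpace ℝ E] [FiniteDimensional ℝ E] [Fintype ι] (b : OrthonormalBasis ι ℝ E)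
    (F : E → ℝ) (y : E) : Δ F y = ∑ i, fderiv ℝ (fderiv ℝ F) y (b i) (b i) := by
  simp [laplacian_eq_iteratedFDeriv_orthonormalBasis F b, iteratedFDeriv_two_apply]

section SecondDerivative

variable {E : Type*} [NormedAddCommGroup E] [NormedSpace ℝ E] {F : E → ℝ}

theorem fderiv_fderiv_clm_apply {y : E} (hF : ContDiffAt ℝ 2 F y) (A : E →L[ℝ] E) (v : E) :
    fderiv ℝ (fun y => fderiv ℝ F y (A y)) y v =
      fderiv ℝ (fderiv ℝ F) y v (A y) + fderiv ℝ F y (A v) := by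
  have h1 : DifferentiableAt ℝ (fderiv ℝ F) y :=
    (hF.fderiv_right (m := 1) (by norm_num)).differentiableAt one_ne_zero
  rw [(h1.hasFDerivAt.clm_apply A.hasFDerivAt).fderiv]
  simp [add_comm]

theorem contDiffAt_fderiv_clm_apply {y : E} (hF : ContDiffAt ℝ 2 F y) (A : E →L[ℝ] E) :
    ContDiffAt ℝ 1 (fun y => fderiv ℝ F y (A y)) y :=
  (hF.fderiv_right (by norm_num)).clm_apply A.contDiff.contDiffAt

end SecondDerivative

theorem eq_of_hasDerivAt_eq_zero {u : ℝ → ℝ} {a b : ℝ} (hab : a < b)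
    (hu : ContinuousOn u (Icc a b)) (hu' : ∀ s ∈ Ioo a b, HasDerivAt u 0 s) : u b = u a := by
  obtain ⟨-, -, hs⟩ := exists_hasDerivAt_eq_slope u (fun _ => 0) hab hu hu'
  simpa [sub_eq_zero, hab.ne'] using hs.symm

theorem eq_zero_of_radial_laplace {m : ℕ} {p p' : ℝ → ℝ}
    (hp : ∀ s ∈ Icc (0 : ℝ) 1, HasDerivAt p (p' s) s) (hp0 : p 0 = 0)
    (h : ∀ s ∈ Ioo (0 : ℝ) 1, s * p' s + m * p s = 0) {s : ℝ} (hs : s ∈ Ioo (0 : ℝ) 1) :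
    p s = 0 := by
  have hd : ∀ t ∈ Icc 0 s, HasDerivAt (fun t => t ^ m * p t)
      (m * t ^ (m - 1) * p t + t ^ m * p' t) t := fun t ht =>
    (hasDerivAt_pow m t).fun_mul (hp t ⟨ht.1, ht.2.trans hs.2.le⟩)
  have hconst := eq_of_hasDerivAt_eq_zero hs.1 (u := fun t => t ^ m * p t)
    (fun t ht => (hd t ht).continuousAt.continuousWithinAt) fun t ht => by
      refine (hd t ⟨ht.1.le, ht.2.le⟩).congr_deriv ?_
      refine (mul_eq_zero_iff_left ht.1.ne').1 ?_
      rcases m with _ | m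
      · simpa using h t ⟨ht.1, ht.2.trans hs.2⟩
      · simp only [Nat.add_sub_cancel, pow_succ]
        linear_combination t ^ (m + 1) * h t ⟨ht.1, ht.2.trans hs.2⟩
  simpa [hp0, hs.1.ne'] using hconst

section MeanValue

variable {E : Type*} [NormedAddCommGroup E] [InnerProductSpace ℝ E] [FiniteDimensional ℝ E]
  [MeasurableSpace E] [BorelSpace E] {σ : Measure E} [IsFiniteMeasure σ] {ρ : ℝ} {F : E → ℝ}

theorem IsRotationInvariant.integral_fderiv_fderiv_add (hσ : IsRotationInvariant σ)
    (hσρ : ∀ᵐ y ∂σ, y ∈ closedBall 0 ρ) (hF : ∀ y ∈ closedBall 0 ρ, ContDiffAt ℝ 2 F y) :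
    ∫ y, fderiv ℝ (fderiv ℝ F) y y y ∂σ + (finrank ℝ E - 1 : ℝ) * ∫ y, fderiv ℝ F y y ∂σ =
      ∫ y, ‖y‖ ^ 2 * Δ F y ∂σ := by
  let b := stdOrthonormalBasis ℝ E
  let A i j := rotationGenerator (b i) (b j)
  have hDF : ContinuousOn (fderiv ℝ F) (closedBall 0 ρ) := fun y hy =>
    ((hF y hy).continuousAt_fderiv two_ne_zero).continuousWithinAt
  have hD2F : ContinuousOn (fderiv ℝ (fderiv ℝ F)) (closedBall 0 ρ) := fun y hy =>
    (((hF y hy).fderiv_right (m := 1) (by norm_num)).continuousAt_fderiv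
      one_ne_zero).continuousWithinAt
  have hint {g : E → ℝ} (hg : ContinuousOn g (closedBall 0 ρ)) : Integrable g σ :=
    integrable_of_continuousOn_of_ae_mem (isCompact_closedBall 0 ρ) hσρ hg
  have hA (i j) : ∫ y, (fderiv ℝ (fderiv ℝ F) y (A i j y) (A i j y) +
      fderiv ℝ F y (A i j (A i j y))) ∂σ = 0 := by
    rw [← hσ.integral_fderiv_rotationGenerator hσρ
      (fun y hy => contDiffAt_fderiv_clm_apply (hF y hy) (A i j)) (b i) (b j)]
    exact integral_congr_ae <| hσρ.mono fun y hy => (fderiv_fderiv_clm_apply (hF y hy) _ _).symm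
  have hsum (y : E) : ∑ i, ∑ j, (fderiv ℝ (fderiv ℝ F) y (A i j y) (A i j y) +
      fderiv ℝ F y (A i j (A i j y))) = 2 * (‖y‖ ^ 2 * Δ F y - (fderiv ℝ (fderiv ℝ F) y y y
        + (finrank ℝ E - 1 : ℝ) * fderiv ℝ F y y)) := by
    simp only [A, Finset.sum_add_distrib, ← map_sum, sum_bilin_rotationGenerator,
      sum_rotationGenerator_sq_apply, laplacian_eq_sum_fderiv_fderiv b, map_smul, smul_eq_mul,
      Fintype.card_fin]
    ring
  have hΔ : ContinuousOn (fun y => ‖y‖ ^ 2 * Δ F y) (closedBall 0 ρ) := by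
    simp only [laplacian_eq_sum_fderiv_fderiv b]
    fun_prop
  have h0 : ∫ y, ∑ i, ∑ j, (fderiv ℝ (fderiv ℝ F) y (A i j y) (A i j y) +
      fderiv ℝ F y (A i j (A i j y))) ∂σ = 0 := by
    have hAint (i j) := hint (g := fun y => fderiv ℝ (fderiv ℝ F) y (A i j y) (A i j y) +
      fderiv ℝ F y (A i j (A i j y))) (by fun_prop)
    rw [integral_finsetSum _ fun i _ => integrable_finsetSum _ fun j _ => hAint i j]
    simp [integral_finsetSum _ fun j _ => hAint _ j, hA]
  simp only [hsum, integral_const_mul] at h0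
  rw [integral_sub (hint hΔ) (hint (by fun_prop)), integral_add (hint (by fun_prop))
    (hint (by fun_prop)), integral_const_mul] at h0
  linarith

theorem IsRotationInvariant.mul_integral_fderiv_fderiv_smul_add (hσ : IsRotationInvariant σ)
    (hσρ : ∀ᵐ y ∂σ, y ∈ closedBall 0 ρ) (hF : HarmonicOnNhd F (closedBall 0 ρ)) {s : ℝ}
    (hs : s ∈ Ioo (0 : ℝ) 1) :
    s * ∫ y, fderiv ℝ (fderiv ℝ F) (s • y) y y ∂σ +
      (finrank ℝ E - 1 : ℝ) * ∫ y, fderiv ℝ F (s • y) y ∂σ = 0 := by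
  have hsσ : ∀ᵐ y ∂(σ.map (s • ·)), y ∈ closedBall 0 ρ :=
    (ae_map_iff (continuous_const_smul s).measurable.aemeasurable measurableSet_closedBall).2
      (hσρ.mono fun y hy => smul_mem_closedBall_zero (Ioo_subset_Icc_self hs) hy)
  have hΔ : ∫ y, ‖y‖ ^ 2 * Δ F y ∂(σ.map (s • ·)) = 0 :=
    integral_eq_zero_of_ae <| hsσ.mono fun y hy => by simp [(hF y hy).2.self_of_nhds]
  have h := (hσ.map_const_smul s).integral_fderiv_fderiv_add hsσ fun y hy => (hF y hy).1
  have hemb : MeasurableEmbedding fun y : E => s • y :=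
    (Homeomorph.smulOfNeZero s hs.1.ne').measurableEmbedding
  simp only [hΔ, hemb.integral_map, map_smul, smul_apply, smul_eq_mul, integral_const_mul] at h
  exact (mul_eq_zero_iff_left hs.1.ne').1 (by linear_combination h)

variable [Nontrivial E]

theorem IsRotationInvariant.integral_fderiv_smul_eq_zero (hσ : IsRotationInvariant σ)
    (hσρ : ∀ᵐ y ∂σ, y ∈ closedBall 0 ρ) (hF : HarmonicOnNhd F (closedBall 0 ρ)) {s : ℝ}
    (hs : s ∈ Ioo (0 : ℝ) 1) : ∫ y, fderiv ℝ F (s • y) y ∂σ = 0 := by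
  refine eq_zero_of_radial_laplace (m := finrank ℝ E - 1)
    (fun s hs => hasDerivAt_integral_fderiv_smul (isCompact_closedBall 0 ρ) hσρ
      fun y hy => (hF _ (smul_mem_closedBall_zero hs hy)).1)
    (by simpa using hσ.integral_clm_apply _) (fun s hs => ?_) hs
  rw [Nat.cast_pred finrank_pos]
  exact hσ.mul_integral_fderiv_fderiv_smul_add hσρ hF hs

theorem IsRotationInvariant.integral_eq_of_harmonicOnNhd (hσ : IsRotationInvariant σ)
    (hσρ : ∀ᵐ y ∂σ, y ∈ closedBall 0 ρ) (hF : HarmonicOnNhd F (closedBall 0 ρ)) :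
    ∫ y, F y ∂σ = σ.real univ * F 0 := by
  have hd : ∀ s ∈ Icc (0 : ℝ) 1, HasDerivAt (fun s : ℝ => ∫ y, F (s • y) ∂σ)
      (∫ y, fderiv ℝ F (s • y) y ∂σ) s := fun s hs =>
    hasDerivAt_integral_comp_smul (isCompact_closedBall 0 ρ) hσρ
      fun y hy => (hF _ (smul_mem_closedBall_zero hs hy)).1.of_le one_le_two
  have h := eq_of_hasDerivAt_eq_zero zero_lt_one
    (fun s hs => (hd s hs).continuousAt.continuousWithinAt) fun s hs => by
      simpa only [hσ.integral_fderiv_smul_eq_zero hσρ hF hs] using hd s ⟨hs.1.le, hs.2.le⟩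
  simpa using h

end MeanValue

/-- The radial profile of the fundamental solution of the Laplacian in dimension `2 * ν`, as a
function of the squared distance to the pole and normalized to have derivative `-q ^ (-ν)`. -/
noncomputable def newtonProfile (ν q : ℝ) : ℝ :=
  if ν = 1 then -Real.log q else q ^ (1 - ν) / (ν - 1)

theorem hasDerivAt_newtonProfile (ν : ℝ) {q : ℝ} (hq : 0 < q) :
    HasDerivAt (newtonProfile ν) (-q ^ (-ν)) q := by
  rcases eq_or_ne ν 1 with rfl | hν
  · rw [show newtonProfile 1 = fun q => -Real.log q by ext; simp [newtonProfile],
      Real.rpow_neg_one]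
    exact (Real.hasDerivAt_log hq.ne').neg
  · rw [show newtonProfile ν = fun q => q ^ (1 - ν) / (ν - 1) by ext; simp [newtonProfile, hν]]
    have hν' : ν - 1 ≠ 0 := sub_ne_zero.2 hν
    refine ((Real.hasDerivAt_rpow_const (p := 1 - ν) (.inl hq.ne')).div_const _).congr_deriv ?_
    rw [show 1 - ν - 1 = -ν by ring]
    field_simp
    ring

theorem contDiffAt_newtonProfile (ν : ℝ) {n : WithTop ℕ∞} {q : ℝ} (hq : 0 < q) :
    ContDiffAt ℝ n (newtonProfile ν) q := by
  unfold newtonProfile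
  split_ifs with h
  · exact (Real.contDiffAt_log.2 hq.ne').neg
  · exact (Real.contDiffAt_rpow_const_of_ne hq.ne').div_const _

theorem continuousOn_newtonProfile (ν : ℝ) : ContinuousOn (newtonProfile ν) (Ioi 0) :=
  fun _ hq => (hasDerivAt_newtonProfile ν hq).continuousAt.continuousWithinAt

theorem strictAntiOn_newtonProfile (ν : ℝ) : StrictAntiOn (newtonProfile ν) (Ioi 0) := by
  refine strictAntiOn_of_deriv_neg (convex_Ioi 0) (continuousOn_newtonProfile ν) fun q hq => ?_
  rw [interior_Ioi] at hq
  rw [(hasDerivAt_newtonProfile ν hq).deriv]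
  exact neg_neg_of_pos (Real.rpow_pos_of_pos hq _)

section NewtonKernel

variable {E : Type*} [NormedAddCommGroup E] [InnerProductSpace ℝ E]

/-- The fundamental solution of the Laplacian with pole at the origin, up to a positive factor,
in dimension `2 * ν`. The value at the pole is junk. -/
noncomputable def newtonKernel (ν : ℝ) (z : E) : ℝ :=
  newtonProfile ν (‖z‖ ^ 2)

theorem contDiffAt_newtonKernel (ν : ℝ) {n : WithTop ℕ∞} {z : E} (hz : z ≠ 0) :
    ContDiffAt ℝ n (newtonKernel ν) z :=
  (contDiffAt_newtonProfile ν (by positivity)).comp z (contDiff_norm_sq ℝ).contDiffAt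

theorem hasFDerivAt_newtonKernel (ν : ℝ) {z : E} (hz : z ≠ 0) :
    HasFDerivAt (newtonKernel ν) ((-2 * (‖z‖ ^ 2) ^ (-ν)) • innerSL ℝ z) z := by
  have h := (hasDerivAt_newtonProfile ν (q := ‖z‖ ^ 2) (by positivity)).comp_hasFDerivAt z
    (hasStrictFDerivAt_norm_sq z).hasFDerivAt
  exact h.congr_fderiv (by module)

theorem fderiv_fderiv_newtonKernel_apply (ν : ℝ) {z : E} (hz : z ≠ 0) (v w : E) :
    fderiv ℝ (fderiv ℝ (newtonKernel ν)) z v w =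
      4 * ν * (‖z‖ ^ 2) ^ (-ν - 1) * ⟪z, v⟫ * ⟪z, w⟫ - 2 * (‖z‖ ^ 2) ^ (-ν) * ⟪v, w⟫ := by
  have hcoef : HasFDerivAt (fun z : E => -2 * (‖z‖ ^ 2) ^ (-ν))
      ((4 * ν * (‖z‖ ^ 2) ^ (-ν - 1)) • innerSL ℝ z) z := by
    have h := ((Real.hasDerivAt_rpow_const (x := ‖z‖ ^ 2) (p := -ν)
      (.inl (by positivity))).comp_hasFDerivAt z
      (hasStrictFDerivAt_norm_sq z).hasFDerivAt).const_mul (-2)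
    exact h.congr_fderiv (by module)
  have hfderiv : fderiv ℝ (newtonKernel ν) =ᶠ[𝓝 z]
      fun z => (-2 * (‖z‖ ^ 2) ^ (-ν)) • innerSL ℝ z :=
    (eventually_ne_nhds hz).mono fun z hz => (hasFDerivAt_newtonKernel ν hz).fderiv
  rw [hfderiv.fderiv_eq, (hcoef.fun_smul (innerSL ℝ).hasFDerivAt).fderiv]
  have hinner (u w : E) : (innerSL ℝ : E →L[ℝ] E →L[ℝ] ℝ) u w = ⟪u, w⟫ := rfl
  simp only [add_apply, smul_apply, ContinuousLinearMap.smulRight_apply, hinner, smul_eq_mul]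
  ring

theorem harmonicAt_newtonKernel [FiniteDimensional ℝ E] {ν : ℝ} (hν : 2 * ν = finrank ℝ E) {z : E}
    (hz : z ≠ 0) : HarmonicAt (newtonKernel ν) z := by
  refine ⟨contDiffAt_newtonKernel ν hz, (eventually_ne_nhds hz).mono fun z hz => ?_⟩
  let b := stdOrthonormalBasis ℝ E
  have hz' : ‖z‖ ^ 2 ≠ 0 := by positivity
  have hb : ∑ i, ⟪z, b i⟫ ^ 2 = ‖z‖ ^ 2 := by simpa using b.sum_sq_norm_inner_left z
  simp only [laplacian_eq_sum_fderiv_fderiv b, fderiv_fderiv_newtonKernel_apply ν hz,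
    real_inner_self_eq_norm_sq, b.norm_eq_one, mul_assoc, ← sq, ← Finset.mul_sum, hb,
    Finset.sum_sub_distrib, Finset.sum_const, Finset.card_univ, Fintype.card_fin, nsmul_eq_mul,
    ← hν, Real.rpow_sub_one hz', Pi.zero_apply]
  field_simp
  ring

end NewtonKernel

section SphereChart

theorem exists_mem_nhds_hausdorffMeasure_image_lt_top {V F : Type*} [NormedAddCommGroup V]
    [NormedSpace ℝ V] [FiniteDimensional ℝ V] [MeasurableSpace V] [BorelSpace V]
    [NormedAddCommGroup F] [NormedSpace ℝ F] [MeasurableSpace F] [BorelSpace F] {g : V → F} {v : V}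
    (hg : ContDiffAt ℝ 1 g v) : ∃ k ∈ 𝓝 v, μH[finrank ℝ V] (g '' k) < ⊤ := by
  obtain ⟨C, t, ht, hC⟩ := hg.exists_lipschitzOnWith
  obtain ⟨k, hk, hkt, hkc⟩ := local_compact_nhds ht
  refine ⟨k, hk, ((hC.mono hkt).hausdorffMeasure_image_le (by positivity)).trans_lt ?_⟩
  exact ENNReal.mul_lt_top (ENNReal.rpow_lt_top_of_nonneg (by positivity) ENNReal.coe_ne_top)
    hkc.measure_lt_top

variable {E : Type*} [NormedAddCommGroup E] [InnerProductSpace ℝ E]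

theorem finrank_orthogonal_span_singleton_eq_sub_one [FiniteDimensional ℝ E] {e : E} (he : e ≠ 0) :
    (finrank ℝ (ℝ ∙ e)ᗮ : ℝ) = finrank ℝ E - 1 := by
  rw [← (ℝ ∙ e).finrank_add_finrank_orthogonal, finrank_span_singleton he]
  push_cast
  ring

theorem coe_orthogonalProjectionOnto_orthogonal_unit {e : E} (he : ‖e‖ = 1) (y : E) :
    ((ℝ ∙ e)ᗮ.orthogonalProjectionOnto y : E) = y - ⟪e, y⟫ • e := by
  rw [Submodule.coe_orthogonalProjectionOnto_apply, Submodule.starProjection_orthogonal_val,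
    Submodule.starProjection_unit_singleton ℝ he]

theorem norm_sq_orthogonalProjectionOnto_orthogonal_unit {e : E} (he : ‖e‖ = 1) (y : E) :
    ‖(ℝ ∙ e)ᗮ.orthogonalProjectionOnto y‖ ^ 2 = ‖y‖ ^ 2 - ⟪e, y⟫ ^ 2 := by
  rw [Submodule.coe_norm, coe_orthogonalProjectionOnto_orthogonal_unit he, norm_sub_sq_real,
    inner_smul_right, norm_smul, he, real_inner_comm, mul_one, Real.norm_eq_abs, sq_abs]
  ring

/-- The inverse of the orthogonal projection along the unit vector `e` on the cap `⟪e, y⟫ ≥ 0` of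
the sphere of radius `r` centered at the origin. -/
noncomputable def sphereChart (e : E) (r : ℝ) (w : (ℝ ∙ e)ᗮ) : E :=
  w + √(r ^ 2 - ‖w‖ ^ 2) • e

theorem contDiffAt_sphereChart (e : E) {r : ℝ} {w : (ℝ ∙ e)ᗮ} (hw : ‖w‖ < r) :
    ContDiffAt ℝ 1 (sphereChart e r) w := by
  have hpos : 0 < r ^ 2 - ‖w‖ ^ 2 := sub_pos.2 (by gcongr)
  exact (ℝ ∙ e)ᗮ.subtypeL.contDiff.contDiffAt.add
    (((contDiffAt_const.sub (contDiff_norm_sq ℝ).contDiffAt).sqrt hpos.ne').smul contDiffAt_const)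

theorem sphereChart_orthogonalProjectionOnto {e y : E} (he : ‖e‖ = 1) (hy : 0 ≤ ⟪e, y⟫) :
    sphereChart e ‖y‖ ((ℝ ∙ e)ᗮ.orthogonalProjectionOnto y) = y := by
  rw [sphereChart, norm_sq_orthogonalProjectionOnto_orthogonal_unit he, sub_sub_cancel,
    Real.sqrt_sq hy, coe_orthogonalProjectionOnto_orthogonal_unit he, sub_add_cancel]

theorem inner_sphereChart {e : E} (he : ‖e‖ = 1) (r : ℝ) (w : (ℝ ∙ e)ᗮ) :
    ⟪e, sphereChart e r w⟫ = √(r ^ 2 - ‖w‖ ^ 2) := by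
  rw [sphereChart, inner_add_right, Submodule.mem_orthogonal_singleton_iff_inner_right.1 w.2,
    inner_smul_right, real_inner_self_eq_norm_sq, he, one_pow, mul_one, zero_add]

theorem orthogonalProjectionOnto_sphereChart {e : E} (he : ‖e‖ = 1) (r : ℝ) (w : (ℝ ∙ e)ᗮ) :
    (ℝ ∙ e)ᗮ.orthogonalProjectionOnto (sphereChart e r w) = w := by
  apply Subtype.ext
  rw [coe_orthogonalProjectionOnto_orthogonal_unit he, inner_sphereChart he, sphereChart,
    add_sub_cancel_right]

theorem sphereChart_mem_sphere {e : E} (he : ‖e‖ = 1) {r : ℝ} (hr : 0 ≤ r) {w : (ℝ ∙ e)ᗮ}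
    (hw : ‖w‖ ≤ r) : sphereChart e r w ∈ sphere (0 : E) r := by
  have hsq : 0 ≤ r ^ 2 - ‖w‖ ^ 2 := sub_nonneg.2 (by gcongr)
  have h := norm_sq_orthogonalProjectionOnto_orthogonal_unit he (sphereChart e r w)
  rw [orthogonalProjectionOnto_sphereChart he, inner_sphereChart he, Real.sq_sqrt hsq] at h
  rw [mem_sphere_zero_iff_norm, ← sq_eq_sq₀ (norm_nonneg _) hr]
  linarith

variable [FiniteDimensional ℝ E] [MeasurableSpace E] [BorelSpace E] {r : ℝ}

theorem hausdorffMeasure_sphere_lt_top (hr : 0 < r) :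
    μH[(finrank ℝ E : ℝ) - 1] (sphere (0 : E) r) < ⊤ := by
  refine (isCompact_sphere 0 r).measure_lt_top_of_nhdsWithin fun x hx => ?_
  have hx : ‖x‖ = r := mem_sphere_zero_iff_norm.1 hx
  have hx0 : x ≠ 0 := norm_pos_iff.1 (hx ▸ hr)
  let e : E := ‖x‖⁻¹ • x
  have he : ‖e‖ = 1 := norm_smul_inv_norm hx0
  have hex : ⟪e, x⟫ = r := by
    rw [real_inner_smul_left, real_inner_self_eq_norm_sq, hx, sq, inv_mul_cancel_left₀ hr.ne']
  let P := (ℝ ∙ e)ᗮ.orthogonalProjectionOnto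
  have hPx : ‖P x‖ < r := by
    have h := norm_sq_orthogonalProjectionOnto_orthogonal_unit he x
    rw [hex, hx, sub_self, sq_eq_zero_iff] at h
    exact h.trans_lt hr
  obtain ⟨k, hk, hkr⟩ :=
    exists_mem_nhds_hausdorffMeasure_image_lt_top (contDiffAt_sphereChart e hPx)
  rw [finrank_orthogonal_span_singleton_eq_sub_one (norm_pos_iff.1 (he ▸ one_pos))] at hkr
  refine ⟨sphereChart e r '' k, ?_, hkr⟩
  have hP : ∀ᶠ y in 𝓝 x, P y ∈ k := P.continuous.continuousAt.eventually_mem hk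
  have hcap : ∀ᶠ y in 𝓝 x, 0 < ⟪e, y⟫ :=
    (continuousAt_const.inner continuousAt_id).eventually_const_lt (hr.trans_eq hex.symm)
  filter_upwards [hP.filter_mono nhdsWithin_le_nhds, hcap.filter_mono nhdsWithin_le_nhds,
    self_mem_nhdsWithin] with y hyk hye hyr
  refine ⟨P y, hyk, ?_⟩
  rw [← mem_sphere_zero_iff_norm.1 hyr, sphereChart_orthogonalProjectionOnto he hye.le]

theorem hausdorffMeasure_sphere_pos [Nontrivial E] (hr : 0 < r) :
    0 < μH[(finrank ℝ E : ℝ) - 1] (sphere (0 : E) r) := by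
  obtain ⟨e, he⟩ := exists_norm_eq E zero_le_one
  rw [← finrank_orthogonal_span_singleton_eq_sub_one (norm_pos_iff.1 (he ▸ one_pos))]
  calc 0 < μH[finrank ℝ (ℝ ∙ e)ᗮ] (ball (0 : (ℝ ∙ e)ᗮ) r) :=
        isOpen_ball.measure_pos _ (nonempty_ball.2 hr)
    _ ≤ μH[finrank ℝ (ℝ ∙ e)ᗮ] ((ℝ ∙ e)ᗮ.orthogonalProjectionOnto '' sphere (0 : E) r) :=
        measure_mono fun w hw => ⟨sphereChart e r w,
          sphereChart_mem_sphere he hr.le (mem_ball_zero_iff.1 hw).le,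
          orthogonalProjectionOnto_sphereChart he r w⟩
    _ ≤ μH[finrank ℝ (ℝ ∙ e)ᗮ] (sphere (0 : E) r) :=
        hausdorffMeasure_orthogonalProjectionOnto_le _ _ _ (by positivity)

end SphereChart

section SurfaceMeasure

variable {E : Type*} [NormedAddCommGroup E] [InnerProductSpace ℝ E] [MeasurableSpace E]
  [BorelSpace E]

variable (E) in
/-- The surface measure on the sphere of radius `r` centered at the origin. -/
noncomputable def surfaceMeasure (r : ℝ) : Measure E :=
  μH[(finrank ℝ E : ℝ) - 1].restrict (sphere (0 : E) r)

theorem ae_mem_surfaceMeasure (r : ℝ) : ∀ᵐ y ∂surfaceMeasure E r, y ∈ sphere (0 : E) r :=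
  ae_restrict_mem isClosed_sphere.measurableSet

theorem ae_norm_eq_surfaceMeasure (r : ℝ) : ∀ᵐ y ∂surfaceMeasure E r, ‖y‖ = r :=
  (ae_mem_surfaceMeasure r).mono fun _ => mem_sphere_zero_iff_norm.1

theorem isRotationInvariant_surfaceMeasure (r : ℝ) :
    IsRotationInvariant (surfaceMeasure E r) := fun R => by
  have hsphere : MeasurableSet (sphere (0 : E) r) := isClosed_sphere.measurableSet
  have h := (R.toIsometryEquiv.measurePreserving_hausdorffMeasure
    ((finrank ℝ E : ℝ) - 1)).restrict_preimage hsphere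
  have hR : R.toIsometryEquiv ⁻¹' sphere (0 : E) r = sphere 0 r := by
    ext y
    simp
  rwa [hR] at h

theorem setIntegral_sphere_eq_surfaceMeasure (x : E) (r : ℝ) (h : E → ℝ) :
    ∫ y in sphere x r, h y ∂μH[(finrank ℝ E : ℝ) - 1] = ∫ y, h (x + y) ∂surfaceMeasure E r := by
  have hx : IsometryEquiv.addLeft x ⁻¹' sphere x r = sphere (0 : E) r := by
    ext y
    simp
  rw [← ((IsometryEquiv.addLeft x).measurePreserving_hausdorffMeasure _).setIntegral_preimage_emb
    (IsometryEquiv.addLeft x).toHomeomorph.measurableEmbedding, hx]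
  rfl

theorem setAverage_sphere_eq_surfaceMeasure (x : E) (r : ℝ) (h : E → ℝ) :
    ⨍ y in sphere x r, h y ∂μH[(finrank ℝ E : ℝ) - 1] =
      ((surfaceMeasure E r).real univ)⁻¹ * ∫ y, h (x + y) ∂surfaceMeasure E r := by
  have hmass := setIntegral_sphere_eq_surfaceMeasure x r (fun _ => (1 : ℝ))
  rw [setAverage_eq, setIntegral_sphere_eq_surfaceMeasure, smul_eq_mul]
  congr 2
  simpa using hmass

variable [FiniteDimensional ℝ E] {r : ℝ}

theorem isFiniteMeasure_surfaceMeasure (hr : 0 < r) : IsFiniteMeasure (surfaceMeasure E r) :=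
  ⟨by simpa [surfaceMeasure] using hausdorffMeasure_sphere_lt_top hr⟩

theorem surfaceMeasure_real_univ_pos [Nontrivial E] (hr : 0 < r) :
    0 < (surfaceMeasure E r).real univ := by
  have := isFiniteMeasure_surfaceMeasure (E := E) hr
  refine ENNReal.toReal_pos ?_ (measure_ne_top _ _)
  simpa [surfaceMeasure] using (hausdorffMeasure_sphere_pos (E := E) hr).ne'

end SurfaceMeasure

section HarmonicFunction

variable {E : Type*} [NormedAddCommGroup E] [InnerProductSpace ℝ E] [FiniteDimensional ℝ E]
  {F : E → ℝ}

theorem laplacian_comp_add_left (F : E → ℝ) (a x : E) :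
    Δ (fun y => F (a + y)) x = Δ F (a + x) := by
  simp only [laplacian_eq_iteratedFDeriv_stdOrthonormalBasis, iteratedFDeriv_comp_add_left]

theorem harmonicAt_comp_add_left {a x : E} (hF : HarmonicAt F (a + x)) :
    HarmonicAt (fun y => F (a + y)) x := by
  refine ⟨hF.1.comp x (contDiffAt_const.add contDiffAt_id), ?_⟩
  have hΔ := (continuous_const_add a).continuousAt.eventually hF.2
  exact hΔ.mono fun y hy => (laplacian_comp_add_left F a y).trans hy

theorem isHarmonicOn_of_harmonicOnNhd [MeasurableSpace E] [BorelSpace E] [Nontrivial E]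
    {U : Set E} (hF : HarmonicOnNhd F U) : IsHarmonicOn ((finrank ℝ E : ℝ) - 1) F U := by
  refine ⟨hF.continuousOn, fun x r hr hxr => ?_⟩
  have := isFiniteMeasure_surfaceMeasure (E := E) hr
  have hball : HarmonicOnNhd (fun y => F (x + y)) (closedBall 0 r) := fun y hy =>
    harmonicAt_comp_add_left (hF _ (hxr (by simpa using hy)))
  rw [setAverage_sphere_eq_surfaceMeasure,
    (isRotationInvariant_surfaceMeasure r).integral_eq_of_harmonicOnNhd
      ((ae_mem_surfaceMeasure r).mono fun _ hy => sphere_subset_closedBall hy) hball, add_zero,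
    inv_mul_cancel_left₀ (surfaceMeasure_real_univ_pos hr).ne']

end HarmonicFunction

section TruncatedKernel

variable {E : Type*} [NormedAddCommGroup E]

/-- The Newtonian kernel frozen at its value at distance `δ` on the ball of radius `δ`. -/
noncomputable def truncatedKernel (ν δ : ℝ) (z : E) : ℝ :=
  newtonProfile ν (max ‖z‖ δ ^ 2)

theorem strictAntiOn_newtonProfile_sq (ν : ℝ) :
    StrictAntiOn (fun t : ℝ => newtonProfile ν (t ^ 2)) (Ioi 0) := fun _ ha _ hb hab =>
  strictAntiOn_newtonProfile ν (mem_Ioi.2 (pow_pos ha 2)) (mem_Ioi.2 (pow_pos hb 2))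
    (pow_lt_pow_left₀ hab (le_of_lt ha) two_ne_zero)

theorem continuous_truncatedKernel (ν : ℝ) {δ : ℝ} (hδ : 0 < δ) :
    Continuous (truncatedKernel ν δ : E → ℝ) :=
  (continuousOn_newtonProfile ν).comp_continuous (by fun_prop) fun _ =>
    mem_Ioi.2 (pow_pos (lt_max_of_lt_right hδ) 2)

theorem truncatedKernel_sub_rev (ν δ : ℝ) (x y : E) :
    truncatedKernel ν δ (x - y) = truncatedKernel ν δ (y - x) := by
  rw [truncatedKernel, norm_sub_rev, ← truncatedKernel]

theorem truncatedKernel_of_norm_le (ν : ℝ) {δ : ℝ} {z : E} (h : ‖z‖ ≤ δ) :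
    truncatedKernel ν δ z = newtonProfile ν (δ ^ 2) := by
  rw [truncatedKernel, max_eq_right h]

theorem truncatedKernel_le_of_max_le (ν : ℝ) {δ δ' : ℝ} (hδ : 0 < δ) {z z' : E}
    (h : max ‖z‖ δ ≤ max ‖z'‖ δ') : truncatedKernel ν δ' z' ≤ truncatedKernel ν δ z :=
  (strictAntiOn_newtonProfile_sq ν).antitoneOn (mem_Ioi.2 (lt_max_of_lt_right hδ))
    (mem_Ioi.2 ((lt_max_of_lt_right hδ).trans_le h)) h

theorem truncatedKernel_anti (ν : ℝ) {δ δ' : ℝ} (hδ : 0 < δ) (h : δ ≤ δ') (z : E) :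
    truncatedKernel ν δ' z ≤ truncatedKernel ν δ z :=
  truncatedKernel_le_of_max_le ν hδ (max_le_max_left _ h)

theorem truncatedKernel_anti_norm (ν : ℝ) {δ : ℝ} (hδ : 0 < δ) {z z' : E} (h : ‖z‖ ≤ ‖z'‖) :
    truncatedKernel ν δ z' ≤ truncatedKernel ν δ z :=
  truncatedKernel_le_of_max_le ν hδ (max_le_max_right _ h)

theorem truncatedKernel_le_newtonProfile_sq (ν : ℝ) {δ : ℝ} (hδ : 0 < δ) (z : E) :
    truncatedKernel ν δ z ≤ newtonProfile ν (δ ^ 2) :=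
  (truncatedKernel_anti_norm ν hδ (by simp)).trans_eq
    (truncatedKernel_of_norm_le (z := (0 : E)) ν (by simpa using hδ.le))

theorem newtonKernel_sub_rev (ν : ℝ) (x y : E) :
    newtonKernel ν (x - y) = newtonKernel ν (y - x) := by
  rw [newtonKernel, norm_sub_rev, ← newtonKernel]

theorem truncatedKernel_of_le_norm (ν : ℝ) {δ : ℝ} {z : E} (h : δ ≤ ‖z‖) :
    truncatedKernel ν δ z = newtonKernel ν z := by
  rw [truncatedKernel, max_eq_left h, newtonKernel]

theorem truncatedKernel_le_newtonKernel (ν δ : ℝ) {z : E} (hz : z ≠ 0) :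
    truncatedKernel ν δ z ≤ newtonKernel ν z := by
  have hz : 0 < ‖z‖ := norm_pos_iff.2 hz
  exact (strictAntiOn_newtonProfile_sq ν).antitoneOn (mem_Ioi.2 hz)
    (mem_Ioi.2 (lt_max_of_lt_left hz)) (le_max_left _ _)

end TruncatedKernel

section IntegralContinuity

variable {X : Type*} [TopologicalSpace X] [MeasurableSpace X] [BorelSpace X]
  {σ : Measure X} [IsFiniteMeasure σ] {B : Set X}

theorem integrable_prod_of_continuousOn_of_ae_mem {Y : Type*} [TopologicalSpace Y]
    [MeasurableSpace Y] [BorelSpace Y] [T2Space X] [T2Space Y] [SecondCountableTopologyEither X Y]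
    {τ : Measure Y} [IsFiniteMeasure τ] {C : Set Y} (hB : IsCompact B) (hC : IsCompact C)
    (hσ : ∀ᵐ x ∂σ, x ∈ B) (hτ : ∀ᵐ y ∂τ, y ∈ C) {f : X × Y → ℝ} (hf : ContinuousOn f (B ×ˢ C)) :
    Integrable f (σ.prod τ) := by
  refine integrable_of_continuousOn_of_ae_mem (hB.prod hC) ?_ hf
  filter_upwards [Measure.quasiMeasurePreserving_fst.ae hσ,
    Measure.quasiMeasurePreserving_snd.ae hτ] with p hp₁ hp₂ using ⟨hp₁, hp₂⟩

theorem continuous_integral_of_ae_mem {Z : Type*} [TopologicalSpace Z] [FirstCountableTopology Z]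
    [LocallyCompactSpace Z] (hB : IsCompact B) (hσ : ∀ᵐ y ∂σ, y ∈ B) {f : Z → X → ℝ}
    (hf : Continuous (Function.uncurry f)) :
    Continuous fun z => ∫ y, f z y ∂σ := by
  have h := continuous_parametric_integral_of_continuous (μ := σ) hf hB
  rwa [Measure.restrict_eq_self_of_ae_mem hσ] at h

end IntegralContinuity

section NewtonTheorem

variable {E : Type*} [NormedAddCommGroup E] [InnerProductSpace ℝ E]

theorem norm_sub_le_norm_smul_sub {z y : E} (h : ‖y‖ ≤ ‖z‖) {s : ℝ} (hs : 1 ≤ s) :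
    ‖z - y‖ ≤ ‖s • z - y‖ := by
  have hinner : ⟪z, y⟫ ≤ ‖z‖ ^ 2 := (real_inner_le_norm z y).trans (by rw [sq]; gcongr)
  have hs' : 0 ≤ s - 1 := sub_nonneg.2 hs
  rw [← sq_le_sq₀ (norm_nonneg _) (norm_nonneg _), norm_sub_sq_real, norm_sub_sq_real,
    norm_smul, real_inner_smul_left, Real.norm_eq_abs, abs_of_nonneg (zero_le_one.trans hs)]
  nlinarith [mul_nonneg hs' (sub_nonneg.2 hinner), mul_nonneg (mul_nonneg hs' hs') (sq_nonneg ‖z‖)]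

theorem continuousOn_newtonKernel (ν : ℝ) : ContinuousOn (newtonKernel ν) ({0}ᶜ : Set E) :=
  fun _ hz => (contDiffAt_newtonKernel (n := 0) ν hz).continuousAt.continuousWithinAt

theorem continuousOn_newtonKernel_sub (ν : ℝ) {A B : Set E} (hAB : Disjoint A B) :
    ContinuousOn (fun p : E × E => newtonKernel ν (p.1 - p.2)) (A ×ˢ B) :=
  (continuousOn_newtonKernel ν).comp (by fun_prop) fun _ hp =>
    sub_ne_zero.2 (hAB.ne_of_mem hp.1 hp.2)

variable [MeasurableSpace E] [BorelSpace E]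

theorem IsRotationInvariant.integral_comp_norm_sub {σ : Measure E}
    (hσ : IsRotationInvariant σ) (g : ℝ → ℝ) {x x' : E} (h : ‖x‖ = ‖x'‖) :
    ∫ y, g ‖x - y‖ ∂σ = ∫ y, g ‖x' - y‖ ∂σ := by
  obtain ⟨R, rfl⟩ : ∃ R : E ≃ₗᵢ[ℝ] E, R x = x' :=
    ⟨(ℝ ∙ (x - x'))ᗮ.reflection, Submodule.reflection_sub h⟩
  rw [← hσ.integral_comp R fun y => g ‖R x - y‖]
  simp only [← _root_.map_sub, LinearIsometryEquiv.norm_map]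

variable [FiniteDimensional ℝ E] [Nontrivial E] {ν r : ℝ}

theorem IsRotationInvariant.integral_newtonKernel_sub_of_lt_norm {σ : Measure E}
    [IsFiniteMeasure σ] (hσ : IsRotationInvariant σ) (hσr : ∀ᵐ y ∂σ, y ∈ closedBall 0 r)
    (hν : 2 * ν = finrank ℝ E) {z : E} (hz : r < ‖z‖) :
    ∫ y, newtonKernel ν (z - y) ∂σ = σ.real univ * newtonKernel ν z := by
  have hharm : HarmonicOnNhd (fun y => newtonKernel ν (-z + y)) (closedBall 0 r) := fun y hy => by
    refine harmonicAt_comp_add_left (harmonicAt_newtonKernel hν ?_)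
    rw [neg_add_eq_sub, sub_ne_zero]
    rintro rfl
    exact hz.not_ge (mem_closedBall_zero_iff.1 hy)
  simpa only [neg_add_eq_sub, newtonKernel_sub_rev, sub_zero] using
    hσ.integral_eq_of_harmonicOnNhd hσr hharm

theorem integral_newtonKernel_sub_surfaceMeasure_of_norm_lt (hν : 2 * ν = finrank ℝ E) {z : E}
    (hz : ‖z‖ < r) : ∫ y, newtonKernel ν (z - y) ∂surfaceMeasure E r =
      (surfaceMeasure E r).real univ * newtonProfile ν (r ^ 2) := by
  have hr : 0 < r := (norm_nonneg z).trans_lt hz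
  have hrad : ∀ᵐ y ∂surfaceMeasure E r, newtonKernel ν y = newtonProfile ν (r ^ 2) :=
    (ae_norm_eq_surfaceMeasure r).mono fun y hy => by rw [newtonKernel, hy]
  rcases eq_or_ne z 0 with rfl | hz0
  · simp only [newtonKernel_sub_rev ν (0 : E), sub_zero]
    rw [integral_congr_ae hrad, integral_const, smul_eq_mul]
  have hz' : 0 < ‖z‖ := norm_pos_iff.2 hz0
  have := isFiniteMeasure_surfaceMeasure (E := E) hr
  have := isFiniteMeasure_surfaceMeasure (E := E) hz'
  have hdisj : Disjoint (sphere (0 : E) ‖z‖) (sphere 0 r) :=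
    disjoint_left.2 fun x hx hxr => hz.ne (hx.symm.trans hxr)
  apply mul_left_cancel₀ (surfaceMeasure_real_univ_pos (E := E) hz').ne'
  calc (surfaceMeasure E ‖z‖).real univ * ∫ y, newtonKernel ν (z - y) ∂surfaceMeasure E r
      = ∫ x, ∫ y, newtonKernel ν (x - y) ∂surfaceMeasure E r ∂surfaceMeasure E ‖z‖ := by
        rw [← smul_eq_mul, ← integral_const]
        exact integral_congr_ae ((ae_norm_eq_surfaceMeasure ‖z‖).mono fun x hx =>
          (isRotationInvariant_surfaceMeasure r).integral_comp_norm_sub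
            (fun t => newtonProfile ν (t ^ 2)) hx.symm)
    _ = ∫ y, ∫ x, newtonKernel ν (x - y) ∂surfaceMeasure E ‖z‖ ∂surfaceMeasure E r :=
        integral_integral_swap (integrable_prod_of_continuousOn_of_ae_mem (isCompact_sphere _ _)
          (isCompact_sphere _ _) (ae_mem_surfaceMeasure _) (ae_mem_surfaceMeasure _)
          (continuousOn_newtonKernel_sub ν hdisj))
    _ = ∫ _, (surfaceMeasure E ‖z‖).real univ * newtonProfile ν (r ^ 2) ∂surfaceMeasure E r := by
        refine integral_congr_ae ?_
        filter_upwards [hrad, ae_norm_eq_surfaceMeasure r] with y hy hyr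
        simp only [newtonKernel_sub_rev ν _ y]
        rw [(isRotationInvariant_surfaceMeasure _).integral_newtonKernel_sub_of_lt_norm
          ((ae_mem_surfaceMeasure _).mono fun _ hx => sphere_subset_closedBall hx) hν
          (hyr.symm ▸ hz), hy]
    _ = _ := by rw [integral_const, smul_eq_mul]; ring

theorem integral_newtonKernel_sub_surfaceMeasure (hν : 2 * ν = finrank ℝ E) (hr : 0 < r) {z : E}
    (hz : ‖z‖ ≠ r) : ∫ y, newtonKernel ν (z - y) ∂surfaceMeasure E r =
      (surfaceMeasure E r).real univ * truncatedKernel ν r z := by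
  have := isFiniteMeasure_surfaceMeasure (E := E) hr
  rcases hz.lt_or_gt with h | h
  · rw [truncatedKernel_of_norm_le ν h.le,
      integral_newtonKernel_sub_surfaceMeasure_of_norm_lt hν h]
  · rw [truncatedKernel_of_le_norm ν h.le]
    exact (isRotationInvariant_surfaceMeasure r).integral_newtonKernel_sub_of_lt_norm
      ((ae_mem_surfaceMeasure r).mono fun _ hy => sphere_subset_closedBall hy) hν h

end NewtonTheorem

section TruncatedPotential

variable {E : Type*} [NormedAddCommGroup E] [MeasurableSpace E]

/-- The potential of `μ` with respect to the Newtonian kernel truncated at distance `δ`. -/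
noncomputable def truncatedPotential (ν δ : ℝ) (μ : Measure E) (z : E) : ℝ :=
  ∫ x, truncatedKernel ν δ (z - x) ∂μ

variable [BorelSpace E] {μ : Measure E} [IsFiniteMeasure μ] {K : Set E}

theorem integrable_truncatedKernel_sub (hK : IsCompact K) (hμ : ∀ᵐ x ∂μ, x ∈ K) (ν : ℝ) {δ : ℝ}
    (hδ : 0 < δ) (z : E) : Integrable (fun x => truncatedKernel ν δ (z - x)) μ :=
  integrable_of_continuousOn_of_ae_mem hK hμ
    ((continuous_truncatedKernel ν hδ).comp (by fun_prop)).continuousOn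

theorem truncatedPotential_anti (hK : IsCompact K) (hμ : ∀ᵐ x ∂μ, x ∈ K) (ν : ℝ) {δ δ' : ℝ}
    (hδ : 0 < δ) (h : δ ≤ δ') (z : E) :
    truncatedPotential ν δ' μ z ≤ truncatedPotential ν δ μ z :=
  integral_mono (integrable_truncatedKernel_sub hK hμ ν (hδ.trans_le h) z)
    (integrable_truncatedKernel_sub hK hμ ν hδ z) fun _ => truncatedKernel_anti ν hδ h _

theorem continuous_truncatedPotential [NormedSpace ℝ E] [FiniteDimensional ℝ E]
    (hK : IsCompact K) (hμ : ∀ᵐ x ∂μ, x ∈ K) (ν : ℝ) {δ : ℝ} (hδ : 0 < δ) :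
    Continuous (truncatedPotential ν δ μ) :=
  continuous_integral_of_ae_mem hK hμ ((continuous_truncatedKernel ν hδ).comp (by fun_prop))

end TruncatedPotential

section SurfacePotential

variable {E : Type*} [NormedAddCommGroup E] [InnerProductSpace ℝ E] [FiniteDimensional ℝ E]
  [MeasurableSpace E] [BorelSpace E]

theorem integrable_surfaceMeasure {r : ℝ} (hr : 0 < r) {g : E → ℝ} (hg : Continuous g) :
    Integrable g (surfaceMeasure E r) := by
  have := isFiniteMeasure_surfaceMeasure (E := E) hr
  exact integrable_of_continuousOn_of_ae_mem (isCompact_sphere 0 r) (ae_mem_surfaceMeasure r)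
    hg.continuousOn

theorem continuous_truncatedPotential_surfaceMeasure (ν : ℝ) {r δ : ℝ} (hr : 0 < r) (hδ : 0 < δ) :
    Continuous (truncatedPotential ν δ (surfaceMeasure E r)) :=
  have := isFiniteMeasure_surfaceMeasure (E := E) hr
  continuous_truncatedPotential (isCompact_sphere 0 r) (ae_mem_surfaceMeasure r) ν hδ

theorem truncatedPotential_surfaceMeasure_smul_le (ν : ℝ) {r δ s : ℝ} (hr : 0 < r) (hδ : 0 < δ)
    {z : E} (hz : ‖z‖ = r) (hs : 1 ≤ s) : truncatedPotential ν δ (surfaceMeasure E r) (s • z) ≤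
      truncatedPotential ν δ (surfaceMeasure E r) z := by
  have hint (z : E) : Integrable (fun y => truncatedKernel ν δ (z - y)) (surfaceMeasure E r) :=
    integrable_surfaceMeasure hr ((continuous_truncatedKernel ν hδ).comp (by fun_prop))
  refine integral_mono_ae (hint _) (hint _) ((ae_norm_eq_surfaceMeasure r).mono fun y hy => ?_)
  exact truncatedKernel_anti_norm ν hδ (norm_sub_le_norm_smul_sub (hy.trans hz.symm).le hs)

variable [Nontrivial E] {ν r δ : ℝ}

theorem truncatedPotential_surfaceMeasure_le_radius (hν : 2 * ν = finrank ℝ E) (hr : 0 < r)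
    (hδ : 0 < δ) (z : E) : truncatedPotential ν δ (surfaceMeasure E r) z ≤
      (surfaceMeasure E r).real univ * truncatedKernel ν r z := by
  have := isFiniteMeasure_surfaceMeasure (E := E) hr
  have hclosed := isClosed_le (continuous_truncatedPotential_surfaceMeasure (E := E) ν hr hδ)
    ((continuous_truncatedKernel ν hr).const_mul ((surfaceMeasure E r).real univ))
  have hdense : Dense (sphere (0 : E) r)ᶜ :=
    interior_eq_empty_iff_dense_compl.1 (interior_sphere _ hr.ne')
  refine hclosed.closure_subset_iff.2 (fun w hw => ?_) (hdense z)
  have hw' : ‖w‖ ≠ r := fun h => hw (mem_sphere_zero_iff_norm.2 h)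
  have hne {y : E} (hy : y ∈ sphere 0 r) : w - y ≠ 0 := sub_ne_zero.2 fun h => hw (h ▸ hy)
  rw [mem_ofPred_eq, ← integral_newtonKernel_sub_surfaceMeasure hν hr hw']
  refine integral_mono_ae (integrable_surfaceMeasure hr ((continuous_truncatedKernel ν hδ).comp
    (by fun_prop))) (integrable_of_continuousOn_of_ae_mem (isCompact_sphere 0 r)
    (ae_mem_surfaceMeasure r) ((continuousOn_newtonKernel ν).comp (by fun_prop) fun _ => hne)) ?_
  exact (ae_mem_surfaceMeasure r).mono fun y hy => truncatedKernel_le_newtonKernel ν δ (hne hy)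

theorem eventually_truncatedPotential_surfaceMeasure_eq (hν : 2 * ν = finrank ℝ E) (hr : 0 < r)
    {z : E} (hz : ‖z‖ ≠ r) : ∀ᶠ δ in 𝓝[>] (0 : ℝ), truncatedPotential ν δ (surfaceMeasure E r) z =
      (surfaceMeasure E r).real univ * truncatedKernel ν r z := by
  filter_upwards [Ioo_mem_nhdsGT (abs_pos.2 (sub_ne_zero.2 hz))] with δ hδ
  rw [← integral_newtonKernel_sub_surfaceMeasure hν hr hz]
  refine integral_congr_ae ((ae_norm_eq_surfaceMeasure r).mono fun y hy => ?_)
  exact truncatedKernel_of_le_norm ν (hδ.2.le.trans (hy ▸ abs_norm_sub_norm_le z y))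

theorem tendsto_truncatedPotential_surfaceMeasure (hν : 2 * ν = finrank ℝ E) (hr : 0 < r) (z : E) :
    Tendsto (fun δ => truncatedPotential ν δ (surfaceMeasure E r) z) (𝓝[>] 0)
      (𝓝 ((surfaceMeasure E r).real univ * truncatedKernel ν r z)) := by
  rcases ne_or_eq ‖z‖ r with hz | hz
  · exact tendsto_const_nhds.congr'
      ((eventually_truncatedPotential_surfaceMeasure_eq hν hr hz).mono fun _ => Eq.symm)
  refine tendsto_order.2 ⟨fun c hc => ?_, fun c hc => ?_⟩
  -- On the sphere itself, bound the potential from below by its value at a nearby exterior point.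
  · have hcont : Continuous fun s : ℝ => (surfaceMeasure E r).real univ *
        truncatedKernel ν r (s • z) :=
      continuous_const.mul ((continuous_truncatedKernel ν hr).comp (by fun_prop))
    have hev : ∀ᶠ s in 𝓝[>] (1 : ℝ), c < (surfaceMeasure E r).real univ *
        truncatedKernel ν r (s • z) :=
      ((hcont.tendsto 1).mono_left nhdsWithin_le_nhds).eventually_const_lt (by simpa using hc)
    obtain ⟨s, hcs, hs : 1 < s⟩ := (hev.and self_mem_nhdsWithin).exists
    have hsz : ‖s • z‖ ≠ r := by
      rw [norm_smul, Real.norm_of_nonneg (zero_le_one.trans hs.le), hz]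
      exact (lt_mul_of_one_lt_left hr hs).ne'
    filter_upwards [eventually_truncatedPotential_surfaceMeasure_eq hν hr hsz,
      self_mem_nhdsWithin] with δ hδ hδ0
    exact (hδ ▸ hcs).trans_le (truncatedPotential_surfaceMeasure_smul_le ν hr hδ0 hz hs.le)
  · filter_upwards [self_mem_nhdsWithin] with δ hδ
    exact (truncatedPotential_surfaceMeasure_le_radius hν hr hδ z).trans_lt hc

end SurfacePotential

section SphereMeanOfPotential

variable {E : Type*} [NormedAddCommGroup E] [InnerProductSpace ℝ E] [FiniteDimensional ℝ E]
  [MeasurableSpace E] [BorelSpace E] {μ : Measure E} [IsFiniteMeasure μ] {K : Set E} {ν r δ : ℝ}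

theorem integral_truncatedPotential_add_surfaceMeasure (hK : IsCompact K) (hμ : ∀ᵐ x ∂μ, x ∈ K)
    (ν : ℝ) (hr : 0 < r) (hδ : 0 < δ) (y : E) :
    ∫ w, truncatedPotential ν δ μ (y + w) ∂surfaceMeasure E r =
      ∫ x, truncatedPotential ν δ (surfaceMeasure E r) (x - y) ∂μ := by
  have := isFiniteMeasure_surfaceMeasure (E := E) hr
  have hcont : Continuous (Function.uncurry fun w x => truncatedKernel ν δ (y + w - x)) :=
    (continuous_truncatedKernel ν hδ).comp (by fun_prop)
  refine (integral_integral_swap (integrable_prod_of_continuousOn_of_ae_mem (isCompact_sphere _ r)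
    hK (ae_mem_surfaceMeasure r) hμ hcont.continuousOn)).trans ?_
  refine integral_congr_ae (.of_forall fun x => integral_congr_ae (.of_forall fun w => ?_))
  beta_reduce
  rw [truncatedKernel_sub_rev, sub_sub]

theorem integrable_truncatedPotential_surfaceMeasure_sub (hK : IsCompact K)
    (hμ : ∀ᵐ x ∂μ, x ∈ K) (ν : ℝ) (hr : 0 < r) (hδ : 0 < δ) (y : E) :
    Integrable (fun x => truncatedPotential ν δ (surfaceMeasure E r) (x - y)) μ :=
  integrable_of_continuousOn_of_ae_mem hK hμ
    ((continuous_truncatedPotential_surfaceMeasure ν hr hδ).comp (by fun_prop)).continuousOn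

variable [Nontrivial E]

theorem tendsto_integral_truncatedPotential_add_surfaceMeasure (hν : 2 * ν = finrank ℝ E)
    (hK : IsCompact K) (hμ : ∀ᵐ x ∂μ, x ∈ K) (hr : 0 < r) {δ : ℕ → ℝ} (hδ : ∀ n, 0 < δ n)
    (hδa : Antitone δ) (hδ0 : Tendsto δ atTop (𝓝 0)) (y : E) :
    Tendsto (fun n => ∫ w, truncatedPotential ν (δ n) μ (y + w) ∂surfaceMeasure E r) atTop
      (𝓝 ((surfaceMeasure E r).real univ * truncatedPotential ν r μ y)) := by
  have := isFiniteMeasure_surfaceMeasure (E := E) hr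
  simp only [fun n => integral_truncatedPotential_add_surfaceMeasure hK hμ ν hr (hδ n)]
  rw [truncatedPotential, ← integral_const_mul]
  refine integral_tendsto_of_tendsto_of_monotone
    (fun n => integrable_truncatedPotential_surfaceMeasure_sub hK hμ ν hr (hδ n) y)
    ((integrable_truncatedKernel_sub hK hμ ν hr y).const_mul _)
    (.of_forall fun x m n hmn => truncatedPotential_anti (isCompact_sphere 0 r)
      (ae_mem_surfaceMeasure r) ν (hδ n) (hδa hmn) _) (.of_forall fun x => ?_)
  rw [truncatedKernel_sub_rev]
  exact (tendsto_truncatedPotential_surfaceMeasure hν hr (x - y)).comp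
    (tendsto_nhdsWithin_iff.2 ⟨hδ0, .of_forall hδ⟩)

end SphereMeanOfPotential

theorem tendsto_min_toReal_iSup {p : ℕ → ℝ} (hp : Monotone p) (c : ℝ) :
    Tendsto (fun n => min (p n) c) atTop (𝓝 (min (⨆ n, (p n : EReal)) c).toReal) := by
  have hlim : Tendsto (fun n => min (p n : EReal) c) atTop (𝓝 (min (⨆ n, (p n : EReal)) c)) :=
    (tendsto_atTop_iSup fun _ _ h => EReal.coe_le_coe_iff.2 (hp h)).min tendsto_const_nhds
  have htop : min (⨆ n, (p n : EReal)) c ≠ ⊤ :=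
    ((min_le_right _ _).trans_lt (EReal.coe_lt_top c)).ne
  have hbot : min (⨆ n, (p n : EReal)) c ≠ ⊥ :=
    (lt_min ((EReal.bot_lt_coe (p 0)).trans_le (le_iSup (fun n => (p n : EReal)) 0))
      (EReal.bot_lt_coe c)).ne'
  refine ((EReal.tendsto_toReal htop hbot).comp hlim).congr fun n => ?_
  rw [Function.comp_apply, ← EReal.coe_strictMono.monotone.map_min, EReal.toReal_coe]

theorem tendsto_integral_min_toReal_iSup {α : Type*} [MeasurableSpace α] {σ : Measure α}
    {p : ℕ → α → ℝ} {c : α → ℝ} (hp : ∀ n, Integrable (p n) σ) (hc : Integrable c σ)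
    (hmono : ∀ x, Monotone fun n => p n x) :
    Tendsto (fun n => ∫ x, min (p n x) (c x) ∂σ) atTop
      (𝓝 (∫ x, (min (⨆ n, (p n x : EReal)) (c x)).toReal ∂σ)) := by
  refine tendsto_integral_of_dominated_convergence (fun x => |p 0 x| + |c x|)
    (fun n => ((hp n).inf hc).aestronglyMeasurable) ((hp 0).abs.add hc.abs)
    (fun n => .of_forall fun x => abs_le.2 ⟨le_min ?_ ?_, min_le_of_right_le ?_⟩)
    (.of_forall fun x => tendsto_min_toReal_iSup (hmono x) (c x))
  · linarith [neg_abs_le (p 0 x), abs_nonneg (c x), hmono x n.zero_le]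
  · linarith [neg_abs_le (c x), abs_nonneg (p 0 x)]
  · linarith [le_abs_self (c x), abs_nonneg (p 0 x)]

section NewtonPotential

variable {E : Type*} [NormedAddCommGroup E] [MeasurableSpace E]

/-- The Newtonian potential of `μ`, as the supremum of its truncations: defined directly by an
integral, it would take a junk value wherever it is infinite. -/
noncomputable def newtonPotential (ν : ℝ) (μ : Measure E) (z : E) : EReal :=
  ⨆ n : ℕ, (truncatedPotential ν (1 / (n + 1)) μ z : EReal)

theorem newtonPotential_ne_bot (ν : ℝ) (μ : Measure E) (z : E) : newtonPotential ν μ z ≠ ⊥ :=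
  ((EReal.bot_lt_coe _).trans_le
    (le_iSup (fun n : ℕ => (truncatedPotential ν (1 / (n + 1)) μ z : EReal)) 0)).ne'

variable [BorelSpace E] {μ : Measure E} [IsFiniteMeasure μ] {K : Set E}

theorem monotone_truncatedPotential_one_div (hK : IsCompact K) (hμ : ∀ᵐ x ∂μ, x ∈ K) (ν : ℝ)
    (z : E) : Monotone fun n : ℕ => truncatedPotential ν (1 / (n + 1)) μ z := fun _ _ h =>
  truncatedPotential_anti hK hμ ν Nat.one_div_pos_of_nat (Nat.one_div_le_one_div h) z

theorem truncatedPotential_le_newtonPotential (hK : IsCompact K) (hμ : ∀ᵐ x ∂μ, x ∈ K) (ν : ℝ)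
    {δ : ℝ} (hδ : 0 < δ) (z : E) :
    (truncatedPotential ν δ μ z : EReal) ≤ newtonPotential ν μ z := by
  obtain ⟨n, hn⟩ := exists_nat_one_div_lt hδ
  exact le_iSup_of_le n (EReal.coe_le_coe_iff.2
    (truncatedPotential_anti hK hμ ν Nat.one_div_pos_of_nat hn.le z))

theorem newtonPotential_eq_integral (hK : IsCompact K) (hμ : ∀ᵐ x ∂μ, x ∈ K) (ν : ℝ) {z : E}
    (hz : z ∉ K) : newtonPotential ν μ z = ((∫ x, newtonKernel ν (z - x) ∂μ : ℝ) : EReal) := by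
  have hmono := EReal.coe_strictMono.monotone.comp (monotone_truncatedPotential_one_div hK hμ ν z)
  refine tendsto_nhds_unique (tendsto_atTop_iSup hmono) (tendsto_const_nhds.congr' ?_)
  obtain ⟨ρ, hρ, hball⟩ := Metric.isOpen_iff.1 hK.isClosed.isOpen_compl z hz
  filter_upwards [tendsto_one_div_add_atTop_nhds_zero_nat.eventually_lt_const hρ] with n hn
  refine EReal.coe_eq_coe_iff.2 (integral_congr_ae (hμ.mono fun x hx => ?_))
  have hρx : ρ ≤ ‖z - x‖ := by
    by_contra! h
    exact hball (mem_ball'.2 (by rwa [dist_eq_norm])) hx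
  exact (truncatedKernel_of_le_norm ν (hn.le.trans hρx)).symm

theorem lowerSemicontinuous_newtonPotential [NormedSpace ℝ E] [FiniteDimensional ℝ E]
    (hK : IsCompact K) (hμ : ∀ᵐ x ∂μ, x ∈ K) (ν : ℝ) :
    LowerSemicontinuous (newtonPotential ν μ) :=
  lowerSemicontinuous_iSup fun _ => (continuous_coe_real_ereal.comp
    (continuous_truncatedPotential hK hμ ν Nat.one_div_pos_of_nat)).lowerSemicontinuous

end NewtonPotential

section Superharmonicity

variable {E : Type*} [NormedAddCommGroup E] [InnerProductSpace ℝ E] [FiniteDimensional ℝ E]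
  [MeasurableSpace E] [BorelSpace E] [Nontrivial E] {μ : Measure E} [IsFiniteMeasure μ]
  {K : Set E} {ν : ℝ}

theorem integral_min_newtonPotential_add_surfaceMeasure_le (hν : 2 * ν = finrank ℝ E)
    (hK : IsCompact K) (hμ : ∀ᵐ x ∂μ, x ∈ K) {r : ℝ} (hr : 0 < r) {c : E → ℝ} (hc : Continuous c)
    (y : E) : ∫ w, (min (newtonPotential ν μ (y + w)) (c w)).toReal ∂surfaceMeasure E r ≤
      (surfaceMeasure E r).real univ * truncatedPotential ν r μ y := by
  have hint (n : ℕ) : Integrable (fun w => truncatedPotential ν (1 / (n + 1)) μ (y + w))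
      (surfaceMeasure E r) := integrable_surfaceMeasure hr
    ((continuous_truncatedPotential hK hμ ν Nat.one_div_pos_of_nat).comp (continuous_const_add y))
  have hcint := integrable_surfaceMeasure hr hc
  refine le_of_tendsto_of_tendsto' (tendsto_integral_min_toReal_iSup hint hcint
      fun w => monotone_truncatedPotential_one_div hK hμ ν (y + w))
    (tendsto_integral_truncatedPotential_add_surfaceMeasure hν hK hμ hr
      (fun _ => Nat.one_div_pos_of_nat) (fun _ _ => Nat.one_div_le_one_div)
      tendsto_one_div_add_atTop_nhds_zero_nat y) fun n => ?_
  exact integral_mono ((hint n).inf hcint) (hint n) fun w => min_le_left _ _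

theorem neg_newtonPotential_le_sphereMean (hν : 2 * ν = finrank ℝ E) (hK : IsCompact K)
    (hμ : ∀ᵐ x ∂μ, x ∈ K) {r : ℝ} (hr : 0 < r) (y : E) : -newtonPotential ν μ y ≤
      sphereMean ((finrank ℝ E : ℝ) - 1) (fun z => -newtonPotential ν μ z) y r := by
  refine le_iInf fun k => ?_
  have htrunc (u : EReal) : ((-u) ⊔ (-(k : ℝ) : EReal)).toReal = -(min u (k : ℝ)).toReal := by
    rw [EReal.max_neg_neg, EReal.toReal_neg_eq]
  rw [setAverage_sphere_eq_surfaceMeasure]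
  simp only [htrunc]
  rw [integral_neg, mul_neg, EReal.coe_neg, EReal.neg_le_neg_iff]
  refine le_trans (EReal.coe_le_coe_iff.2 ?_)
    (truncatedPotential_le_newtonPotential hK hμ ν hr y)
  rw [inv_mul_le_iff₀ (surfaceMeasure_real_univ_pos hr)]
  exact integral_min_newtonPotential_add_surfaceMeasure_le hν hK hμ hr continuous_const y

theorem isSubharmonicOn_neg_newtonPotential (hν : 2 * ν = finrank ℝ E) (hK : IsCompact K)
    (hμ : ∀ᵐ x ∂μ, x ∈ K) :
    IsSubharmonicOn ((finrank ℝ E : ℝ) - 1) (fun z => -newtonPotential ν μ z) univ := by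
  have : NoncompactSpace E := NormedSpace.noncompactSpace ℝ E
  refine ⟨upperSemicontinuousOn_univ_iff.2 ?_, fun z _ => ?_, ?_,
    fun y r hr _ => neg_newtonPotential_le_sphereMean hν hK hμ hr y⟩
  · exact continuous_neg.comp_lowerSemicontinuous_antitone
      (lowerSemicontinuous_newtonPotential hK hμ ν) fun _ _ => EReal.neg_le_neg_iff.2
  · rw [lt_top_iff_ne_top, Ne, EReal.neg_eq_top_iff]
    exact newtonPotential_ne_bot ν μ z
  · obtain ⟨z, hz⟩ := (ne_univ_iff_exists_notMem K).1 hK.ne_univ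
    refine ⟨z, mem_univ z, ?_⟩
    rw [Ne, EReal.neg_eq_bot_iff, newtonPotential_eq_integral hK hμ ν hz]
    exact EReal.coe_ne_top _

end Superharmonicity

theorem IsSubharmonicOn.continuous_fineTopology {E : Type*} [NormedAddCommGroup E]
    [InnerProductSpace ℝ E] [MeasurableSpace E] [BorelSpace E] {d : ℝ} {v : E → EReal}
    (hv : IsSubharmonicOn d v univ) : @Continuous E EReal (fineTopology E d) _ v :=
  continuous_iff_le_induced.2 (iInf₂_le v hv)

theorem eq_of_eqOn_of_forall_not_thinAt {E : Type*} [NormedAddCommGroup E]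
    [InnerProductSpace ℝ E] [MeasurableSpace E] [BorelSpace E] {d : ℝ} {A : Set E}
    (hA : ∀ x, ¬ ThinAt d A x) {u v : E → EReal} (hu : @Continuous E EReal (fineTopology E d) _ u)
    (hv : @Continuous E EReal (fineTopology E d) _ v) (h : EqOn u v A) : u = v := by
  let _ := fineTopology E d
  exact funext fun x => h.closure hu hv (closure_mono sdiff_subset (not_not.1 (hA x)))

theorem measure_le_of_forall_closedBall_le {α : Type*} [MetricSpace α] [SecondCountableTopology α]
    [MeasurableSpace α] [BorelSpace α] [HasBesicovitchCovering α] {μ₁ μ₂ : Measure α}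
    [IsLocallyFiniteMeasure μ₁] [IsLocallyFiniteMeasure μ₂]
    (h : ∀ x, ∀ R > 0, μ₁ (closedBall x R) ≤ μ₂ (closedBall x R)) : μ₁ ≤ μ₂ := by
  have hsupp : ∀ᵐ x ∂μ₁, x ∈ μ₁.support := Measure.support_mem_ae
  have hd : 1 ≤ᵐ[μ₁] μ₂.rnDeriv μ₁ := by
    filter_upwards [Besicovitch.ae_tendsto_rnDeriv μ₂ μ₁, hsupp] with x hx hxs
    refine ge_of_tendsto hx ?_
    have hfin : ∀ᶠ R in 𝓝[>] 0, μ₁ (closedBall x R) < ⊤ :=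
      ((tendsto_closedBall_smallSets x).mono_left nhdsWithin_le_nhds).eventually
        (μ₁.finiteAt_nhds x).eventually
    filter_upwards [hfin, self_mem_nhdsWithin] with R hR hR0
    have hpos := (Measure.mem_support_iff_forall x).1 hxs _ (closedBall_mem_nhds x hR0)
    exact (ENNReal.le_div_iff_mul_le (.inl hpos.ne') (.inl hR.ne)).2
      ((one_mul _).trans_le (h x R hR0))
  calc μ₁ = μ₁.withDensity 1 := withDensity_one.symm
    _ ≤ μ₁.withDensity (μ₂.rnDeriv μ₁) := withDensity_mono hd
    _ ≤ μ₂ := Measure.withDensity_rnDeriv_le _ _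

section Comparison

variable {E : Type*} [NormedAddCommGroup E] {R R' : ℝ}

theorem indicator_closedBall_le_truncatedKernel_sub (ν : ℝ) (hR : 0 < R) (h : R ≤ R') (z x : E) :
    (closedBall z R).indicator (fun _ => newtonProfile ν (R ^ 2) - newtonProfile ν (R' ^ 2)) x ≤
      truncatedKernel ν R (z - x) - truncatedKernel ν R' (z - x) := by
  refine indicator_apply_le' (fun hx => ?_) fun _ => sub_nonneg.2 (truncatedKernel_anti ν hR h _)
  rw [mem_closedBall', dist_eq_norm] at hx
  rw [truncatedKernel_of_norm_le ν hx, truncatedKernel_of_norm_le ν (hx.trans h)]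

theorem truncatedKernel_sub_le_indicator_closedBall (ν : ℝ) (hR : 0 < R) (h : R ≤ R') (z x : E) :
    truncatedKernel ν R (z - x) - truncatedKernel ν R' (z - x) ≤ (closedBall z R').indicator
      (fun _ => newtonProfile ν (R ^ 2) - newtonProfile ν (R' ^ 2)) x := by
  refine le_indicator_apply (fun hx => ?_) fun hx => ?_
  · rw [mem_closedBall', dist_eq_norm] at hx
    rw [truncatedKernel_of_norm_le ν hx]
    exact sub_le_sub_right (truncatedKernel_le_newtonProfile_sq ν hR _) _
  · rw [mem_closedBall', dist_eq_norm, not_le] at hx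
    rw [truncatedKernel_of_le_norm ν hx.le, truncatedKernel_of_le_norm ν (h.trans hx.le), sub_self]

variable [MeasurableSpace E] [BorelSpace E] {μ μ₁ μ₂ : Measure E} [IsFiniteMeasure μ]
  [IsFiniteMeasure μ₁] [IsFiniteMeasure μ₂] {K : Set E} {ν : ℝ}

theorem measureReal_closedBall_mul_le_truncatedPotential_sub (hK : IsCompact K)
    (hμ : ∀ᵐ x ∂μ, x ∈ K) (ν : ℝ) (hR : 0 < R) (h : R ≤ R') (z : E) :
    μ.real (closedBall z R) * (newtonProfile ν (R ^ 2) - newtonProfile ν (R' ^ 2)) ≤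
      truncatedPotential ν R μ z - truncatedPotential ν R' μ z := by
  have hint {δ : ℝ} (hδ : 0 < δ) := integrable_truncatedKernel_sub hK hμ ν hδ z
  rw [← smul_eq_mul, ← integral_indicator_const _ measurableSet_closedBall, truncatedPotential,
    truncatedPotential, ← integral_sub (hint hR) (hint (hR.trans_le h))]
  exact integral_mono ((integrable_const _).indicator measurableSet_closedBall)
    ((hint hR).sub (hint (hR.trans_le h)))
    (indicator_closedBall_le_truncatedKernel_sub ν hR h z)

theorem truncatedPotential_sub_le_measureReal_closedBall_mul (hK : IsCompact K)
    (hμ : ∀ᵐ x ∂μ, x ∈ K) (ν : ℝ) (hR : 0 < R) (h : R ≤ R') (z : E) :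
    truncatedPotential ν R μ z - truncatedPotential ν R' μ z ≤
      μ.real (closedBall z R') * (newtonProfile ν (R ^ 2) - newtonProfile ν (R' ^ 2)) := by
  have hint {δ : ℝ} (hδ : 0 < δ) := integrable_truncatedKernel_sub hK hμ ν hδ z
  rw [← smul_eq_mul, ← integral_indicator_const _ measurableSet_closedBall, truncatedPotential,
    truncatedPotential, ← integral_sub (hint hR) (hint (hR.trans_le h))]
  exact integral_mono ((hint hR).sub (hint (hR.trans_le h)))
    ((integrable_const _).indicator measurableSet_closedBall)
    (truncatedKernel_sub_le_indicator_closedBall ν hR h z)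

theorem measure_closedBall_le_of_truncatedPotential_eq (hK : IsCompact K) (hμ₁ : ∀ᵐ x ∂μ₁, x ∈ K)
    (hμ₂ : ∀ᵐ x ∂μ₂, x ∈ K)
    (h : ∀ δ > 0, truncatedPotential ν δ μ₁ = truncatedPotential ν δ μ₂) (z : E) (hR : 0 < R) :
    μ₁ (closedBall z R) ≤ μ₂ (closedBall z R) := by
  have hlt {R' : ℝ} (hR' : R < R') : μ₁ (closedBall z R) ≤ μ₂ (closedBall z R') := by
    rw [← ENNReal.toReal_le_toReal (measure_ne_top _ _) (measure_ne_top _ _)]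
    refine le_of_mul_le_mul_right ?_ (sub_pos.2 (strictAntiOn_newtonProfile_sq ν (mem_Ioi.2 hR)
      (mem_Ioi.2 (hR.trans hR')) hR'))
    refine (measureReal_closedBall_mul_le_truncatedPotential_sub hK hμ₁ ν hR hR'.le z).trans ?_
    rw [h R hR, h R' (hR.trans hR')]
    exact truncatedPotential_sub_le_measureReal_closedBall_mul hK hμ₂ ν hR hR'.le z
  have hlim := tendsto_measure_biInter_gt (μ := μ₂) (s := closedBall z) (a := R)
    (fun _ _ => measurableSet_closedBall.nullMeasurableSet)
    (fun _ _ _ => closedBall_subset_closedBall) ⟨R + 1, by simp, measure_ne_top _ _⟩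
  have hinter : ⋂ R' > R, closedBall z R' = closedBall z R := by
    ext x
    simpa using (forall_gt_imp_ge_iff_le_of_dense : (∀ R', R < R' → dist x z ≤ R') ↔ _)
  rw [hinter] at hlim
  exact ge_of_tendsto hlim (eventually_nhdsWithin_of_forall fun _ => hlt)

end Comparison

section Uniqueness

variable {E : Type*} [NormedAddCommGroup E] [InnerProductSpace ℝ E] [FiniteDimensional ℝ E]
  [MeasurableSpace E] [BorelSpace E] [Nontrivial E] {μ₁ μ₂ : Measure E} [IsFiniteMeasure μ₁]
  [IsFiniteMeasure μ₂] {K : Set E} {ν : ℝ}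

theorem truncatedPotential_le_of_newtonPotential_le (hν : 2 * ν = finrank ℝ E) (hK : IsCompact K)
    (hμ₁ : ∀ᵐ x ∂μ₁, x ∈ K) (hμ₂ : ∀ᵐ x ∂μ₂, x ∈ K)
    (h : newtonPotential ν μ₁ ≤ newtonPotential ν μ₂) {r : ℝ} (hr : 0 < r) (y : E) :
    truncatedPotential ν r μ₁ y ≤ truncatedPotential ν r μ₂ y := by
  refine le_of_mul_le_mul_left ?_ (surfaceMeasure_real_univ_pos (E := E) hr)
  refine le_of_tendsto' (tendsto_integral_truncatedPotential_add_surfaceMeasure hν hK hμ₁ hr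
    (fun _ => Nat.one_div_pos_of_nat) (fun _ _ => Nat.one_div_le_one_div)
    tendsto_one_div_add_atTop_nhds_zero_nat y) fun n => ?_
  have hcont := (continuous_truncatedPotential hK hμ₁ ν (Nat.one_div_pos_of_nat (n := n))).comp
    (continuous_const_add y)
  have hmin (w : E) : min (newtonPotential ν μ₂ (y + w))
      (truncatedPotential ν (1 / (n + 1)) μ₁ (y + w)) =
        truncatedPotential ν (1 / (n + 1)) μ₁ (y + w) :=
    min_eq_right ((truncatedPotential_le_newtonPotential hK hμ₁ ν Nat.one_div_pos_of_nat _).trans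
      (h _))
  simpa only [Function.comp_apply, hmin, EReal.toReal_coe] using
    integral_min_newtonPotential_add_surfaceMeasure_le hν hK hμ₂ hr hcont y

theorem measure_eq_of_newtonPotential_eq (hν : 2 * ν = finrank ℝ E) (hK : IsCompact K)
    (hμ₁ : ∀ᵐ x ∂μ₁, x ∈ K) (hμ₂ : ∀ᵐ x ∂μ₂, x ∈ K)
    (h : newtonPotential ν μ₁ = newtonPotential ν μ₂) : μ₁ = μ₂ := by
  have htrunc : ∀ δ > 0, truncatedPotential ν δ μ₁ = truncatedPotential ν δ μ₂ := fun δ hδ =>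
    le_antisymm (truncatedPotential_le_of_newtonPotential_le hν hK hμ₁ hμ₂ h.le hδ)
      (truncatedPotential_le_of_newtonPotential_le hν hK hμ₂ hμ₁ h.ge hδ)
  exact le_antisymm
    (measure_le_of_forall_closedBall_le fun z _ hR =>
      measure_closedBall_le_of_truncatedPotential_eq hK hμ₁ hμ₂ htrunc z hR)
    (measure_le_of_forall_closedBall_le fun z _ hR =>
      measure_closedBall_le_of_truncatedPotential_eq hK hμ₂ hμ₁ (fun δ hδ => (htrunc δ hδ).symm) z
        hR)

end Uniqueness

section Duality

theorem mem_closure_of_forall_eq_zero_imp {V : Type*} [NormedAddCommGroup V] [NormedSpace ℝ V]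
    {H : Submodule ℝ V} {f : V}
    (h : ∀ Λ : V →L[ℝ] ℝ, (∀ k ∈ H, Λ k = 0) → Λ f = 0) : f ∈ closure (H : Set V) := by
  by_contra hf
  obtain ⟨Λ, u, hΛf, hΛ⟩ :=
    geometric_hahn_banach_point_closed H.topologicalClosure.convex isClosed_closure hf
  have hu : u < 0 := by simpa using hΛ 0 (zero_mem H.topologicalClosure)
  refine (hΛf.trans hu).ne (h Λ fun k hk => ?_)
  by_contra hne
  have := hΛ _ (H.le_topologicalClosure (H.smul_mem (u / Λ k) hk))
  rw [map_smul, smul_eq_mul, div_mul_cancel₀ _ hne] at this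
  exact this.false

theorem posPart_smul_of_pos {V : Type*} [AddCommGroup V] [Lattice V] [Module ℝ V]
    [PosSMulMono ℝ V] {c : ℝ} (hc : 0 < c) (v : V) : (c • v)⁺ = c • v⁺ := by
  rw [posPart_def, ← smul_zero c]
  exact ((OrderIso.smulRight hc).map_sup v 0).symm

section NormedLattice

variable {V : Type*} [NormedAddCommGroup V] [Lattice V] [HasSolidNorm V] [IsOrderedAddMonoid V]

theorem norm_add_posPart_add_le (a a' b b' : V) :
    ‖(a + a')⁺ + (b + b')⁺‖ ≤ ‖a⁺ + b⁺‖ + ‖a'⁺ + b'⁺‖ := by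
  have hsub (c c' : V) : (c + c')⁺ ≤ c⁺ + c'⁺ :=
    sup_le (add_le_add (le_posPart c) (le_posPart c'))
      (add_nonneg (posPart_nonneg c) (posPart_nonneg c'))
  have hle := add_le_add (hsub a a') (hsub b b')
  rw [add_add_add_comm] at hle
  refine (norm_le_norm_of_abs_le_abs ?_).trans (norm_add_le _ _)
  have hnonneg := add_nonneg (posPart_nonneg (a + a')) (posPart_nonneg (b + b'))
  rwa [abs_of_nonneg hnonneg, abs_of_nonneg (hnonneg.trans hle)]

variable [NormedSpace ℝ V] [PosSMulMono ℝ V]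

theorem exists_nonneg_sub_nonneg_eq (Λ : V →L[ℝ] ℝ) :
    ∃ P Q : V →ₗ[ℝ] ℝ, (∀ g, 0 ≤ g → 0 ≤ P g) ∧ (∀ g, 0 ≤ g → 0 ≤ Q g) ∧
      ∀ g, Λ g = P g - Q g := by
  -- `(g, -g) ↦ Λ g` is dominated by `(a, b) ↦ ‖Λ‖ * ‖a⁺ + b⁺‖`, which vanishes when `a, b ≤ 0`, so
  -- that a dominated extension is nonnegative.
  let S : Submodule ℝ (V × V) := (LinearMap.fst ℝ V V + LinearMap.snd ℝ V V).ker
  have hdom (p : S) : Λ p.1.1 ≤ ‖Λ‖ * ‖p.1.1⁺ + p.1.2⁺‖ := by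
    have hneg : p.1.2 = -p.1.1 := eq_neg_of_add_eq_zero_right (LinearMap.mem_ker.1 p.2)
    rw [hneg, posPart_neg, posPart_add_negPart, norm_abs_eq_norm]
    exact (le_abs_self _).trans (Λ.le_opNorm p.1.1)
  obtain ⟨G, hGS, hG⟩ := exists_extension_of_le_sublinear
    ⟨S, ((Λ : V →ₗ[ℝ] ℝ) ∘ₗ LinearMap.fst ℝ V V).domRestrict S⟩
    (fun p => ‖Λ‖ * ‖p.1⁺ + p.2⁺‖)
    (fun c hc p => by
      rw [Prod.smul_fst, Prod.smul_snd, posPart_smul_of_pos hc, posPart_smul_of_pos hc, ← smul_add,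
        norm_smul, Real.norm_of_nonneg hc.le, mul_left_comm])
    (fun p q => by
      rw [← mul_add]
      exact mul_le_mul_of_nonneg_left (norm_add_posPart_add_le ..) (norm_nonneg Λ))
    hdom
  have hnonneg (p : V × V) (hp : 0 ≤ p) : 0 ≤ G p := by
    have h₁ : (-p).1⁺ = 0 := posPart_eq_zero.2 (neg_nonpos.2 hp.1)
    have h₂ : (-p).2⁺ = 0 := posPart_eq_zero.2 (neg_nonpos.2 hp.2)
    simpa only [h₁, h₂, add_zero, norm_zero, mul_zero, map_neg, neg_nonpos] using hG (-p)
  refine ⟨G ∘ₗ LinearMap.inl ℝ V V, G ∘ₗ LinearMap.inr ℝ V V,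
    fun g hg => hnonneg (g, 0) ⟨hg, le_rfl⟩, fun g hg => hnonneg (0, g) ⟨le_rfl, hg⟩, fun g => ?_⟩
  have hmem : (g, -g) ∈ S := by simp [S]
  calc Λ g = G (g, -g) := (hGS ⟨_, hmem⟩).symm
    _ = G ((g, 0) - (0, g)) := by simp
    _ = G (g, 0) - G (0, g) := map_sub G _ _

end NormedLattice

variable {X : Type*} [TopologicalSpace X] [CompactSpace X]

instance hasSolidNorm_continuousMap : HasSolidNorm C(X, ℝ) where
  solid f g hfg := (ContinuousMap.norm_le f (norm_nonneg g)).2 fun x =>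
    (hfg x).trans (g.norm_coe_le_norm x)

variable [T2Space X] [MeasurableSpace X] [BorelSpace X]

theorem exists_measure_integral_eq_of_nonneg (P : C(X, ℝ) →ₗ[ℝ] ℝ) (hP : ∀ g, 0 ≤ g → 0 ≤ P g) :
    ∃ μ : Measure X, IsFiniteMeasure μ ∧ ∀ g : C(X, ℝ), ∫ x, g x ∂μ = P g := by
  let T : CompactlySupportedContinuousMap X ℝ →ₗ[ℝ] C(X, ℝ) :=
    { toFun := fun g => g.toContinuousMap, map_add' := fun _ _ => rfl, map_smul' := fun _ _ => rfl }
  let Λ := PositiveLinearMap.mk₀ (P ∘ₗ T) fun g hg => hP _ hg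
  exact ⟨RealRMK.rieszMeasure Λ, inferInstance, fun g =>
    RealRMK.integral_rieszMeasure Λ (CompactlySupportedContinuousMap.continuousMapEquiv g)⟩

theorem exists_measure_integral_sub_integral_eq (Λ : C(X, ℝ) →L[ℝ] ℝ) :
    ∃ μ₁ μ₂ : Measure X, IsFiniteMeasure μ₁ ∧ IsFiniteMeasure μ₂ ∧
      ∀ g : C(X, ℝ), Λ g = ∫ x, g x ∂μ₁ - ∫ x, g x ∂μ₂ := by
  obtain ⟨P, Q, hP, hQ, hPQ⟩ := exists_nonneg_sub_nonneg_eq Λ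
  obtain ⟨μ₁, hfin₁, h₁⟩ := exists_measure_integral_eq_of_nonneg P hP
  obtain ⟨μ₂, hfin₂, h₂⟩ := exists_measure_integral_eq_of_nonneg Q hQ
  exact ⟨μ₁, μ₂, hfin₁, hfin₂, fun g => by rw [hPQ, h₁, h₂]⟩

end Duality

section Approximation

variable {E : Type*} [NormedAddCommGroup E] [InnerProductSpace ℝ E]

/-- The function `x ↦ newtonKernel ν (y - x)` on `K`, for a pole `y` off `K`. -/
noncomputable def newtonKernelOn (ν : ℝ) {K : Set E} {y : E} (hy : y ∉ K) : C(K, ℝ) where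
  toFun x := newtonKernel ν (y - x)
  continuous_toFun := (continuousOn_newtonKernel ν).comp_continuous (by fun_prop) fun x =>
    sub_ne_zero.2 fun h => hy (h ▸ x.2)

variable [FiniteDimensional ℝ E]

/-- The continuous functions on `K` that extend to a harmonic function on a neighborhood of `K`. -/
def harmonicExtendable (K : Set E) : Submodule ℝ C(K, ℝ) where
  carrier := {g | ∃ F : E → ℝ, HarmonicOnNhd F K ∧ ∀ x : K, g x = F x}
  add_mem' := by
    rintro g g' ⟨F, hF, hg⟩ ⟨F', hF', hg'⟩
    exact ⟨F + F', hF.add hF', fun x => congrArg₂ (· + ·) (hg x) (hg' x)⟩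
  zero_mem' := ⟨0, harmonicOnNhd_const 0, fun _ => rfl⟩
  smul_mem' := by
    rintro c g ⟨F, hF, hg⟩
    exact ⟨c • F, hF.const_smul, fun x => congrArg (c * ·) (hg x)⟩

theorem newtonKernelOn_mem_harmonicExtendable {ν : ℝ} (hν : 2 * ν = finrank ℝ E) {K : Set E}
    {y : E} (hy : y ∉ K) : newtonKernelOn ν hy ∈ harmonicExtendable K := by
  refine ⟨fun x => newtonKernel ν (-y + x), fun x hx => harmonicAt_comp_add_left ?_, fun x => ?_⟩
  · refine harmonicAt_newtonKernel hν fun h => hy ?_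
    rwa [neg_add_eq_zero.1 h]
  · simp only [neg_add_eq_sub, ← newtonKernel_sub_rev ν y]
    rfl

variable [MeasurableSpace E] [BorelSpace E]

theorem continuous_newtonPotential_fineTopology [Nontrivial E] {ν : ℝ}
    (hν : 2 * ν = finrank ℝ E) {K : Set E} (hK : IsCompact K) {μ : Measure E} [IsFiniteMeasure μ]
    (hμ : ∀ᵐ x ∂μ, x ∈ K) :
    @Continuous E EReal (fineTopology E ((finrank ℝ E : ℝ) - 1)) _ (newtonPotential ν μ) := by
  let _ := fineTopology E ((finrank ℝ E : ℝ) - 1)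
  simpa only [Function.comp_def, neg_neg] using
    continuous_neg.comp (isSubharmonicOn_neg_newtonPotential hν hK hμ).continuous_fineTopology

theorem eq_zero_of_forall_newtonKernelOn_eq_zero [Nontrivial E] {ν : ℝ}
    (hν : 2 * ν = finrank ℝ E) {K : Set E} (hK : IsCompact K)
    (hthin : ∀ x, ¬ ThinAt ((finrank ℝ E : ℝ) - 1) Kᶜ x) {Λ : C(K, ℝ) →L[ℝ] ℝ}
    (hΛ : ∀ (y : E) (hy : y ∉ K), Λ (newtonKernelOn ν hy) = 0) : Λ = 0 := by
  have : CompactSpace K := isCompact_iff_compactSpace.1 hK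
  obtain ⟨μ₁, μ₂, _, _, hΛμ⟩ := exists_measure_integral_sub_integral_eq Λ
  have hemb : MeasurableEmbedding (Subtype.val : K → E) := .subtype_coe hK.measurableSet
  have hmem (μ : Measure K) : ∀ᵐ x ∂μ.map Subtype.val, x ∈ K :=
    hemb.ae_map_iff.2 (.of_forall Subtype.property)
  have hpot_compl : EqOn (newtonPotential ν (μ₁.map Subtype.val))
      (newtonPotential ν (μ₂.map Subtype.val)) Kᶜ := fun y hy => by
    rw [newtonPotential_eq_integral hK (hmem _) ν hy, newtonPotential_eq_integral hK (hmem _) ν hy,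
      hemb.integral_map, hemb.integral_map]
    exact congrArg _ (sub_eq_zero.1 ((hΛμ _).symm.trans (hΛ y hy)))
  have hpot : newtonPotential ν (μ₁.map Subtype.val) = newtonPotential ν (μ₂.map Subtype.val) :=
    eq_of_eqOn_of_forall_not_thinAt hthin
      (continuous_newtonPotential_fineTopology hν hK (hmem _))
      (continuous_newtonPotential_fineTopology hν hK (hmem _)) hpot_compl
  have hμ : μ₁ = μ₂ :=
    hemb.map_injective (measure_eq_of_newtonPotential_eq hν hK (hmem _) (hmem _) hpot)
  ext g
  rw [hΛμ, hμ, sub_self, zero_apply]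

theorem nontrivial_of_not_thinAt {E : Type*} [NormedAddCommGroup E] [InnerProductSpace ℝ E]
    [MeasurableSpace E] [BorelSpace E] {d : ℝ} {A : Set E} {x : E} (h : ¬ ThinAt d A x) :
    Nontrivial E := by
  refine (subsingleton_or_nontrivial E).resolve_left fun _ => h ?_
  have hA : A \ {x} = ∅ := sdiff_eq_empty.2 fun y _ => Subsingleton.elim y x
  simp [ThinAt, hA]

theorem dense_harmonicExtendable {K : Set E} (hK : IsCompact K)
    (hthin : ∀ x, ¬ ThinAt ((finrank ℝ E : ℝ) - 1) Kᶜ x) :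
    Dense (harmonicExtendable K : Set C(K, ℝ)) := by
  have : CompactSpace K := isCompact_iff_compactSpace.1 hK
  have : Nontrivial E := nontrivial_of_not_thinAt (hthin 0)
  have hν : 2 * ((finrank ℝ E : ℝ) / 2) = finrank ℝ E := by ring
  refine fun f => mem_closure_of_forall_eq_zero_imp fun Λ hΛ => ?_
  rw [eq_zero_of_forall_newtonKernelOn_eq_zero hν hK hthin fun y hy =>
    hΛ _ (newtonKernelOn_mem_harmonicExtendable hν hy), zero_apply]

theorem harmonic_approximation_on_compact_general {K : Set E} (hK : IsCompact K)
    (hthin : ∀ x, ¬ ThinAt ((finrank ℝ E : ℝ) - 1) Kᶜ x) {f : E → ℝ} (hf : ContinuousOn f K)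
    {ε : ℝ} (hε : 0 < ε) :
    ∃ U : Set E, ∃ h : E → ℝ, IsOpen U ∧ K ⊆ U ∧ IsHarmonicOn ((finrank ℝ E : ℝ) - 1) h U ∧
      ∀ x ∈ K, |f x - h x| < ε := by
  have : CompactSpace K := isCompact_iff_compactSpace.1 hK
  have : Nontrivial E := nontrivial_of_not_thinAt (hthin 0)
  obtain ⟨g, ⟨F, hF, hgF⟩, hfg⟩ := (dense_harmonicExtendable hK hthin).exists_dist_lt
    ⟨K.domRestrict f, hf.domRestrict⟩ hε
  refine ⟨{x | HarmonicAt F x}, F, isOpen_setOfPred_harmonicAt F, hF,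
    isHarmonicOn_of_harmonicOnNhd fun _ => id, fun x hx => ?_⟩
  rw [← Real.dist_eq, ← hgF ⟨x, hx⟩]
  exact (ContinuousMap.dist_apply_le_dist ⟨x, hx⟩).trans_lt hfg

end Approximation

/-- harmonic approximation on a compact set with empty interior
whose complement is nowhere thin. -/
theorem harmonic_approximation_on_compact
    (N : ℕ) (hN : 2 ≤ N) (K : Set (EuclideanSpace ℝ (Fin N)))
    (hK : IsCompact K) (hKint : interior K = ∅)
    (hthin : ∀ x, ¬ ThinAt ((N : ℝ) - 1) Kᶜ x)
    (f : EuclideanSpace ℝ (Fin N) → ℝ) (hf : ContinuousOn f K)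
    (ε : ℝ) (hε : 0 < ε) :
    ∃ U : Set (EuclideanSpace ℝ (Fin N)), ∃ h : EuclideanSpace ℝ (Fin N) → ℝ,
      IsOpen U ∧ K ⊆ U ∧ IsHarmonicOn ((N : ℝ) - 1) h U ∧
      ∀ x ∈ K, |f x - h x| < ε := by
  simpa only [finrank_euclideanSpace_fin] using harmonic_approximation_on_compact_general hK
    (by simpa only [finrank_euclideanSpace_fin] using hthin) hf hε
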